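/- Let Γ be a group. If the set of left-order positive cones on Γ is infinite, then it is uncountable. -/

import Mathlib

/-- `P` is the positive cone of a left-invariant linear order on the group `G`:
it is closed under multiplication and `G` is the disjoint union of `P`, `P⁻¹`
and `{1}`. -/
def IsPosCone {G : Type*} [Group G] (P : Set G) : Prop :=
  (∀ a ∈ P, ∀ b ∈ P, a * b ∈ P) ∧
  (∀ g : G, g ∈ P ∨ g⁻¹ ∈ P ∨ g = 1) ∧
  (1 : G) ∉ P ∧
  ∀ g ∈ P, g⁻¹ ∉ P

/-!
Suppose that a left-orderable group has only countably many left orders. They form a countable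
compact space, so by the Baire category theorem the conjugation action on it has a finite orbit, and
an order with finite orbit is Conradian. Its convex subgroups are finite in number, since any set of
jumps can be reversed independently. For each jump `C < E`, the subgroup `C` is normal in `E` and,
by Hölder's theorem, `E / C` is torsion-free abelian; it has rank one, as otherwise there would be
an order for each real slope. So `E / C` embeds into `ℚ` and has just two orders.

It remains to see that every other order has the same convex subgroups. For consecutive jumps
`D < C < E`, the group `E` acts on `C / D ⊆ ℚ` by multipliers. If they are all `1`, then `E / D` is
abelian, hence of rank one, which is absurd; if they are all positive but not all `1`, then `E / D`
acts on the line by rational affine maps, and each irrational point induces a different order. So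
some multiplier is negative, and this forces `C` to be convex for every order of `E` for which `D`
is convex. Now induct along the chain of convex subgroups.
-/

/-- `P` is a positive cone of the section `E / D`: the preimage in `E` of the positive cone of an
`E`-invariant linear order on the cosets of `D`. The subgroup `D` need not be normal in `E`. -/
structure IsRelCone {G : Type*} [Group G] (D E : Subgroup G) (P : Set G) : Prop where
  le : D ≤ E
  subset : P ⊆ E
  mul_mem {a b : G} : a ∈ P → b ∈ P → a * b ∈ P
  total {x : G} : x ∈ E → x ∈ P ∨ x⁻¹ ∈ P ∨ x ∈ D
  disjoint {x : G} : x ∈ P → x ∉ D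

/-- `C` is convex for the left order with positive cone `P`: if `1 < a < a * b` and `a * b ∈ C`,
then `a ∈ C`. -/
def IsConvexFor {G : Type*} [Group G] (C : Subgroup G) (P : Set G) : Prop :=
  ∀ a ∈ P, ∀ b ∈ P, a * b ∈ C → a ∈ C

section RelativeCones

variable {G H : Type*} [Group G] [Group H] {B C D E F : Subgroup G} {P Q R S : Set G} {c x : G}

namespace IsRelCone

lemma inv_notMem (h : IsRelCone D E P) (hx : x ∈ P) : x⁻¹ ∉ P := fun hx' =>
  h.disjoint (h.mul_mem hx hx') (by simp only [mul_inv_cancel, D.one_mem])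

lemma mul_mem_left (h : IsRelCone D E P) (hc : c ∈ D) (hx : x ∈ P) : c * x ∈ P := by
  rcases h.total (E.mul_mem (h.le hc) (h.subset hx)) with hcx | hcx | hcx
  · exact hcx
  · refine absurd (D.inv_mem hc) (h.disjoint ?_)
    simpa only [mul_inv_rev, mul_inv_cancel_left] using h.mul_mem hx hcx
  · exact absurd ((D.mul_mem_cancel_left hc).1 hcx) (h.disjoint hx)

lemma mul_mem_right (h : IsRelCone D E P) (hx : x ∈ P) (hc : c ∈ D) : x * c ∈ P := by
  rcases h.total (E.mul_mem (h.subset hx) (h.le hc)) with hxc | hxc | hxc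
  · exact hxc
  · refine absurd (D.inv_mem hc) (h.disjoint ?_)
    simpa only [mul_inv_rev, inv_mul_cancel_right] using h.mul_mem hxc hx
  · exact absurd ((D.mul_mem_cancel_right hc).1 hxc) (h.disjoint hx)

lemma pow_mem (h : IsRelCone D E P) (hx : x ∈ P) {n : ℕ} (hn : n ≠ 0) : x ^ n ∈ P := by
  induction n, Nat.one_le_iff_ne_zero.2 hn using Nat.le_induction with
  | base => rwa [pow_one]
  | succ n hn ih => exact pow_succ x n ▸ h.mul_mem (ih (by omega)) hx

lemma isolated (h : IsRelCone D E P) (hx : x ∈ E) {n : ℕ} (hn : n ≠ 0) (hxn : x ^ n ∈ D) :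
    x ∈ D := by
  rcases h.total hx with hxP | hxP | hxD
  · exact absurd hxn (h.disjoint (h.pow_mem hxP hn))
  · exact absurd (inv_pow x n ▸ D.inv_mem hxn) (h.disjoint (h.pow_mem hxP hn))
  · exact hxD

lemma mem_of_pow_mem (h : IsRelCone D E P) (hx : x ∈ E) {n : ℕ} (hxn : x ^ n ∈ P) : x ∈ P := by
  rcases h.total hx with hxP | hxP | hxD
  · exact hxP
  · rcases eq_or_ne n 0 with rfl | hn
    · exact absurd D.one_mem (h.disjoint (pow_zero x ▸ hxn))
    · exact absurd (inv_pow x n ▸ h.pow_mem hxP hn) (h.inv_notMem hxn)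
  · exact absurd (D.pow_mem hxD n) (h.disjoint hxn)

lemma comap (h : IsRelCone D E P) (f : H →* G) :
    IsRelCone (D.comap f) (E.comap f) (f ⁻¹' P) where
  le := Subgroup.comap_mono h.le
  subset _ hx := h.subset hx
  mul_mem ha hb := by simpa only [Set.mem_preimage, map_mul] using h.mul_mem ha hb
  total hx := by simpa only [Set.mem_preimage, map_inv, Subgroup.mem_comap] using h.total hx
  disjoint hx := h.disjoint hx

lemma inter (h : IsRelCone D E P) (hDC : D ≤ C) (hCE : C ≤ E) : IsRelCone D C (P ∩ C) where
  le := hDC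
  subset := Set.inter_subset_right
  mul_mem ha hb := ⟨h.mul_mem ha.1 hb.1, C.mul_mem ha.2 hb.2⟩
  total hx := (h.total (hCE hx)).imp (⟨·, hx⟩) (.imp_left (⟨·, C.inv_mem hx⟩))
  disjoint hx := h.disjoint hx.1

lemma union (hQ : IsRelCone D C Q) (hP : IsRelCone C E P) : IsRelCone D E (P ∪ Q) where
  le := hQ.le.trans hP.le
  subset := Set.union_subset hP.subset (hQ.subset.trans hP.le)
  mul_mem := by
    rintro a b (ha | ha) (hb | hb)
    · exact .inl (hP.mul_mem ha hb)
    · exact .inl (hP.mul_mem_right ha (hQ.subset hb))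
    · exact .inl (hP.mul_mem_left (hQ.subset ha) hb)
    · exact .inr (hQ.mul_mem ha hb)
  total {x} hx := by
    rcases hP.total hx with hxP | hxP | hxC
    · exact .inl (.inl hxP)
    · exact .inr (.inl (.inl hxP))
    · exact (hQ.total hxC).imp .inr (.imp_left .inr)
  disjoint := by
    rintro x (hx | hx)
    · exact fun hxD => hP.disjoint hx (hQ.le hxD)
    · exact hQ.disjoint hx

lemma sdiff (h : IsRelCone D E P) (hDC : D ≤ C) (hCE : C ≤ E) (hC : IsConvexFor C P) :
    IsRelCone C E (P \ C) where
  le := hCE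
  subset := Set.sdiff_subset.trans h.subset
  mul_mem {a b} ha hb := ⟨h.mul_mem ha.1 hb.1, fun hab => ha.2 (hC a ha.1 b hb.1 hab)⟩
  total {x} hx := by
    by_cases hxC : x ∈ C
    · exact .inr (.inr hxC)
    · exact (h.total hx).imp (⟨·, hxC⟩)
        (.imp (⟨·, mt C.inv_mem_iff.1 hxC⟩) (@hDC x))
  disjoint hx := hx.2

lemma exists_mem_notMem (h : IsRelCone D E P) (hBE : B ≤ E) (hDC : D ≤ C) (hBC : ¬B ≤ C) :
    ∃ x ∈ P, x ∈ B ∧ x ∉ C := by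
  obtain ⟨x, hxB, hxC⟩ := SetLike.not_le_iff_exists.1 hBC
  rcases h.total (hBE hxB) with hxP | hxP | hxD
  · exact ⟨x, hxP, hxB, hxC⟩
  · exact ⟨x⁻¹, hxP, B.inv_mem hxB, mt C.inv_mem_iff.1 hxC⟩
  · exact absurd (hDC hxD) hxC

lemma countable_section (h : {P : Set G | IsRelCone B F P}.Countable) (hR : IsRelCone B C R)
    (hS : IsRelCone E F S) : {Q : Set G | IsRelCone C E Q}.Countable := by
  refine Set.MapsTo.countable_of_injOn (f := fun Q => S ∪ (Q ∪ R))
    (fun Q hQ => (hR.union hQ).union hS)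
    (fun Q hQ Q' hQ' (heq : S ∪ (Q ∪ R) = S ∪ (Q' ∪ R)) => ?_) h
  have recover {Q : Set G} (hQ : IsRelCone C E Q) : (S ∪ (Q ∪ R)) ∩ (E \ C) = Q := by
    ext x
    constructor
    · rintro ⟨hx | hx | hx, hxE, hxC⟩
      · exact absurd hxE (hS.disjoint hx)
      · exact hx
      · exact absurd (hR.subset hx) hxC
    · exact fun hx => ⟨.inr (.inl hx), hQ.subset hx, hQ.disjoint hx⟩
  rw [← recover hQ, heq, recover hQ']

end IsRelCone

lemma isPosCone_iff_isRelCone : IsPosCone P ↔ IsRelCone ⊥ ⊤ P where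
  mp h :=
    { le := bot_le
      subset := Set.subset_univ P
      mul_mem := fun {a b} ha hb => h.1 a ha b hb
      total := fun {x} _ => by simpa only [Subgroup.mem_bot] using h.2.1 x
      disjoint := fun hx hx1 => h.2.2.1 (Subgroup.mem_bot.1 hx1 ▸ hx) }
  mpr h :=
    ⟨fun _ ha _ hb => h.mul_mem ha hb,
      fun x => by simpa only [Subgroup.mem_bot] using h.total (Subgroup.mem_top x),
      fun h1 => h.disjoint h1 (Subgroup.mem_bot.2 rfl), fun _ hx => h.inv_notMem hx⟩

namespace IsConvexFor

lemma bot (h : IsRelCone D E P) : IsConvexFor ⊥ P := fun a ha b hb hab => by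
  refine absurd (h.subset ha) fun _ => h.inv_notMem ha ?_
  rwa [← eq_inv_of_mul_eq_one_right (Subgroup.mem_bot.1 hab)]

lemma of_subset (hP : P ⊆ E) : IsConvexFor E P := fun _ ha _ _ _ => hP ha

lemma comap {C : Subgroup G} (hC : IsConvexFor C P) (f : H →* G) :
    IsConvexFor (C.comap f) (f ⁻¹' P) :=
  fun a ha b hb hab => hC (f a) ha (f b) hb (map_mul f a b ▸ hab)

lemma trans (hC : IsConvexFor C P) (hD : IsConvexFor D (P ∩ C)) (hDC : D ≤ C) :
    IsConvexFor D P := fun a ha b hb hab =>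
  have haC := hC a ha b hb (hDC hab)
  hD a ⟨ha, haC⟩ b ⟨hb, (C.mul_mem_cancel_left haC).1 (hDC hab)⟩ hab

lemma le_total (h : IsRelCone ⊥ ⊤ P) (hC : IsConvexFor C P) (hD : IsConvexFor D P) :
    C ≤ D ∨ D ≤ C := by
  by_contra! hne
  obtain ⟨c, hcP, hcC, hcD⟩ := h.exists_mem_notMem le_top bot_le hne.1
  obtain ⟨d, hdP, hdD, hdC⟩ := h.exists_mem_notMem le_top bot_le hne.2
  rcases h.total (Subgroup.mem_top (c⁻¹ * d)) with hcd | hcd | hcd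
  · exact hcD (hD c hcP _ hcd (by rwa [mul_inv_cancel_left]))
  · exact hdC (hC d hdP _ hcd (by rwa [mul_inv_rev, inv_inv, mul_inv_cancel_left]))
  · exact hcD (inv_mul_eq_one.1 (Subgroup.mem_bot.1 hcd) ▸ hdD)

end IsConvexFor

end RelativeCones

section Flipping

variable {G : Type*} [Group G] {C : Subgroup G} {P : Set G} {a b : G}

/-- The level of `x` in the chain of convex subgroups of the order with positive cone `P`: the
convex subgroups containing `x`. Two elements have the same level exactly when they generate the
same convex subgroup. -/
def level (P : Set G) (x : G) : Set (Subgroup G) := {C | IsConvexFor C P ∧ x ∈ C}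

/-- The cone obtained from `P` by reversing the order on the elements whose level lies in `S`. -/
def flipCone (P : Set G) (S : Set (Set (Subgroup G))) : Set G :=
  {x | (level P x ∉ S ∧ x ∈ P) ∨ (level P x ∈ S ∧ x⁻¹ ∈ P)}

lemma level_inv (P : Set G) (x : G) : level P x⁻¹ = level P x := by
  simp only [level, inv_mem_iff]

lemma level_mul_of_mem_of_notMem (h : IsRelCone ⊥ ⊤ P) (hC : IsConvexFor C P) (ha : a ∈ C)
    (hb : b ∉ C) : level P (a * b) = level P b := by
  ext D
  refine and_congr_right fun hD => ?_
  rcases hC.le_total h hD with hCD | hDC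
  · exact D.mul_mem_cancel_left (hCD ha)
  · exact iff_of_false (fun hab => hb ((C.mul_mem_cancel_left ha).1 (hDC hab)))
      fun hbD => hb (hDC hbD)

lemma level_mul_of_notMem_of_mem (h : IsRelCone ⊥ ⊤ P) (hC : IsConvexFor C P) (hb : b ∉ C)
    (ha : a ∈ C) : level P (b * a) = level P b := by
  rw [← level_inv, mul_inv_rev, level_mul_of_mem_of_notMem h hC (C.inv_mem ha)
    (mt C.inv_mem_iff.1 hb), level_inv]

lemma level_mul_of_level_eq (ha : a ∈ P) (hb : b ∈ P) (hab : level P a = level P b) :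
    level P (a * b) = level P a := by
  ext D
  exact ⟨fun hD => ⟨hD.1, hD.1 a ha b hb hD.2⟩,
    fun hD => ⟨hD.1, D.mul_mem hD.2 (hab ▸ hD : D ∈ level P b).2⟩⟩

lemma exists_convex_of_level_ne (hab : level P a ≠ level P b) :
    ∃ C, IsConvexFor C P ∧ (a ∈ C ∧ b ∉ C ∨ b ∈ C ∧ a ∉ C) := by
  contrapose! hab
  exact Set.ext fun C => and_congr_right fun hC => ⟨(hab C hC).1, (hab C hC).2⟩

lemma mul_mem_flipCone_of_level_eq (h : IsRelCone ⊥ ⊤ P) {S : Set (Set (Subgroup G))}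
    (ha : a ∈ flipCone P S) (hb : b ∈ flipCone P S) (hab : level P a = level P b) :
    a * b ∈ flipCone P S := by
  rcases ha with ⟨haS, haP⟩ | ⟨haS, haP⟩ <;> rcases hb with ⟨hbS, hbP⟩ | ⟨hbS, hbP⟩
  · exact .inl ⟨level_mul_of_level_eq haP hbP hab ▸ haS, h.mul_mem haP hbP⟩
  · exact absurd (hab ▸ hbS) haS
  · exact absurd (hab ▸ haS) hbS
  · have hlevel : level P (b⁻¹ * a⁻¹) = level P b⁻¹ :=
      level_mul_of_level_eq hbP haP (by rw [level_inv, level_inv, hab])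
    rw [← mul_inv_rev, level_inv, level_inv] at hlevel
    exact .inr ⟨hlevel ▸ hbS, mul_inv_rev a b ▸ h.mul_mem hbP haP⟩

lemma mul_mem_flipCone_of_mem_of_notMem (h : IsRelCone ⊥ ⊤ P) {S : Set (Set (Subgroup G))}
    (hC : IsConvexFor C P) (ha : a ∈ C) (hb : b ∉ C) (hbS : b ∈ flipCone P S) :
    a * b ∈ flipCone P S ∧ b * a ∈ flipCone P S := by
  have hPC := h.sdiff bot_le le_top hC
  have hb' : b⁻¹ ∉ C := mt C.inv_mem_iff.1 hb
  simp only [flipCone, Set.mem_ofPred_eq, level_mul_of_mem_of_notMem h hC ha hb,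
    level_mul_of_notMem_of_mem h hC hb ha, mul_inv_rev]
  rcases hbS with ⟨hbS, hbP⟩ | ⟨hbS, hbP⟩
  · exact ⟨.inl ⟨hbS, (hPC.mul_mem_left ha ⟨hbP, hb⟩).1⟩,
      .inl ⟨hbS, (hPC.mul_mem_right ⟨hbP, hb⟩ ha).1⟩⟩
  · exact ⟨.inr ⟨hbS, (hPC.mul_mem_right ⟨hbP, hb'⟩ (C.inv_mem ha)).1⟩,
      .inr ⟨hbS, (hPC.mul_mem_left (C.inv_mem ha) ⟨hbP, hb'⟩).1⟩⟩

lemma isRelCone_flipCone (h : IsRelCone ⊥ ⊤ P) (S : Set (Set (Subgroup G))) :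
    IsRelCone ⊥ ⊤ (flipCone P S) where
  le := bot_le
  subset := Set.subset_univ _
  mul_mem {a b} ha hb := by
    by_cases hab : level P a = level P b
    · exact mul_mem_flipCone_of_level_eq h ha hb hab
    · obtain ⟨C, hC, ⟨haC, hbC⟩ | ⟨hbC, haC⟩⟩ := exists_convex_of_level_ne hab
      · exact (mul_mem_flipCone_of_mem_of_notMem h hC haC hbC hb).1
      · exact (mul_mem_flipCone_of_mem_of_notMem h hC hbC haC ha).2
  total {x} hx := by
    simp only [flipCone, Set.mem_ofPred_eq, level_inv, inv_inv]
    have := h.total hx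
    tauto
  disjoint := by
    rintro x (⟨-, hx⟩ | ⟨-, hx⟩)
    · exact h.disjoint hx
    · exact mt (Subgroup.inv_mem ⊥) (h.disjoint hx)

lemma subset_of_flipCone_eq (h : IsRelCone ⊥ ⊤ P) {S T : Set (Set (Subgroup G))}
    (hS : S ⊆ level P '' P) (hST : flipCone P S = flipCone P T) : S ⊆ T := by
  rintro _ hxS
  obtain ⟨x, hx, rfl⟩ := hS hxS
  have hmem : x⁻¹ ∈ flipCone P S := .inr ⟨by rwa [level_inv], by rwa [inv_inv]⟩
  rw [hST] at hmem
  rcases hmem with ⟨-, hx'⟩ | ⟨hxT, -⟩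
  · exact absurd hx' (h.inv_notMem hx)
  · rwa [level_inv] at hxT

lemma not_countable_powerset {α : Type*} {s : Set α} (hs : s.Infinite) : ¬(𝒫 s).Countable := by
  have : Infinite s := hs.to_subtype
  rw [← Cardinal.le_aleph0_iff_set_countable, Cardinal.mk_powerset, not_le]
  exact (Cardinal.aleph0_le_mk s).trans_lt (Cardinal.cantor _)

lemma finite_levels (h : IsRelCone ⊥ ⊤ P) (hcount : {P : Set G | IsRelCone ⊥ ⊤ P}.Countable) :
    (level P '' P).Finite := by
  by_contra hinf
  exact not_countable_powerset hinf <| Set.MapsTo.countable_of_injOn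
    (fun S _ => isRelCone_flipCone h S) (fun S hS T hT hST =>
      (subset_of_flipCone_eq h hS hST).antisymm (subset_of_flipCone_eq h hT hST.symm)) hcount

theorem finite_convex_of_countable (h : IsRelCone ⊥ ⊤ P)
    (hcount : {P : Set G | IsRelCone ⊥ ⊤ P}.Countable) :
    {C : Subgroup G | IsConvexFor C P}.Finite := by
  refine Set.Finite.of_injOn (f := fun C => {L ∈ level P '' P | C ∈ L})
    (fun _ _ => Set.sep_subset _ _) ?_ (finite_levels h hcount).finite_subsets
  have le_of_eq {C D : Subgroup G} (hC : IsConvexFor C P)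
      (hCD : {L ∈ level P '' P | C ∈ L} = {L ∈ level P '' P | D ∈ L}) : C ≤ D := by
    by_contra hle
    obtain ⟨x, hx, hxC, hxD⟩ := h.exists_mem_notMem le_top bot_le hle
    have hmem : level P x ∈ {L ∈ level P '' P | C ∈ L} := ⟨⟨x, hx, rfl⟩, hC, hxC⟩
    rw [hCD] at hmem
    exact hxD hmem.2.2
  exact fun C hC D hD hCD => (le_of_eq hC hCD).antisymm (le_of_eq hD hCD.symm)

end Flipping

section FiniteOrbit

variable (G : Type*) {X : Type*} [Group G] [TopologicalSpace X] [MulAction G X]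

open scoped Pointwise

open MulAction

lemma exists_isMinimal_subMulAction [CompactSpace X] [Nonempty X] [ContinuousConstSMul G X] :
    ∃ M : SubMulAction G X, IsClosed (M : Set X) ∧ Nonempty M ∧ IsMinimal G M := by
  obtain ⟨M, -, ⟨hMclosed, hMne, hMinv⟩, hMmin⟩ := zorn_superset_nonempty
    {s : Set X | IsClosed s ∧ s.Nonempty ∧ ∀ g : G, ∀ x ∈ s, g • x ∈ s}
    (fun c hc hchain hcne => by
      have : Nonempty c := hcne.to_subtype
      refine ⟨⋂₀ c, ⟨isClosed_sInter fun s hs => (hc hs).1, ?_, fun g x hx s hs =>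
        (hc hs).2.2 g x (hx s hs)⟩, fun s => Set.sInter_subset_of_mem⟩
      exact IsCompact.nonempty_sInter_of_directed_nonempty_isCompact_isClosed
        (fun s hs t ht => (hchain.total hs ht).elim (fun hst => ⟨s, hs, le_rfl, hst⟩)
          fun hts => ⟨t, ht, hts, le_rfl⟩)
        (fun s hs => (hc hs).2.1) (fun s hs => (hc hs).1.isCompact) fun s hs => (hc hs).1)
    Set.univ ⟨isClosed_univ, Set.univ_nonempty, fun _ _ _ => Set.mem_univ _⟩
  refine ⟨⟨M, fun g x hx => hMinv g x hx⟩, hMclosed, hMne.to_subtype, ⟨fun x => ?_⟩⟩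
  have hsub : closure (orbit G (x : X)) ⊆ M :=
    closure_minimal (by rintro _ ⟨g, rfl⟩; exact hMinv g x x.2) hMclosed
  have hsup := hMmin ⟨isClosed_closure, ((nonempty_orbit (x : X)).closure), fun g y hy =>
    smul_closure_orbit_subset g (x : X) (Set.smul_mem_smul_set hy)⟩ hsub
  rw [Subtype.dense_iff, SubMulAction.val_image_orbit]
  exact hsup

lemma finite_of_isMinimal [CompactSpace X] [T2Space X] [Countable X] [Nonempty X]
    [ContinuousConstSMul G X] [IsMinimal G X] : Finite X := by
  obtain ⟨x, hx⟩ := nonempty_interior_of_iUnion_of_closed (f := fun x : X => {x})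
    (fun _ => isClosed_singleton) (Set.iUnion_of_singleton X)
  obtain ⟨I, hI⟩ := isCompact_univ.exists_finite_cover_smul G isOpen_interior hx
  refine Set.finite_univ_iff.1 ((I.finite_toSet.biUnion fun g _ => ?_).subset hI)
  exact ((Set.finite_singleton x).subset interior_subset).smul_set

lemma exists_finite_orbit [CompactSpace X] [T2Space X] [Countable X] [Nonempty X]
    [ContinuousConstSMul G X] : ∃ x : X, (orbit G x).Finite := by
  obtain ⟨M, hclosed, ⟨x⟩, hmin⟩ := exists_isMinimal_subMulAction G (X := X)
  have : CompactSpace M := isCompact_iff_compactSpace.1 hclosed.isCompact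
  have : ContinuousConstSMul G M :=
    ⟨fun g => (continuous_subtype_val.const_smul g).subtype_mk _⟩
  have : Nonempty M := ⟨x⟩
  have : Finite M := finite_of_isMinimal G
  refine ⟨x, (Set.toFinite (M : Set X)).subset ?_⟩
  rintro _ ⟨g, rfl⟩
  exact M.smul_mem g x.2

end FiniteOrbit

section ConradianCones

variable {G H : Type*} [Group G] [Group H] {P : Set G}

lemma IsPosCone.preimage (h : IsPosCone P) (f : H ≃* G) : IsPosCone (f ⁻¹' P) := by
  have hP := (isPosCone_iff_isRelCone.1 h).comap f.toMonoidHom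
  rw [MonoidHom.comap_bot, (MonoidHom.ker_eq_bot_iff f.toMonoidHom).2 f.injective,
    Subgroup.comap_top] at hP
  exact isPosCone_iff_isRelCone.2 hP

/-- The space of left orders on `G`: positive cones, encoded by their indicator functions so as to
carry the topology of pointwise convergence. -/
def ConeSpace (G : Type*) [Group G] : Type _ := {f : G → Bool // IsPosCone {x | f x = true}}

namespace ConeSpace

instance : TopologicalSpace (ConeSpace G) := instTopologicalSpaceSubtype

instance : T2Space (ConeSpace G) := inferInstanceAs (T2Space (Subtype _))

lemma isClosed_isPosCone : IsClosed {f : G → Bool | IsPosCone {x | f x = true}} := by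
  have hclopen (x : G) : IsClopen {f : G → Bool | f x = true} :=
    (isClopen_discrete {true}).preimage (continuous_apply x)
  simp only [IsPosCone, Set.mem_ofPred_eq, Set.ofPred_and, Set.ofPred_forall]
  refine .inter (isClosed_iInter fun a => ?_) (.inter (isClosed_iInter fun x => ?_)
    (.inter (hclopen 1).compl.isClosed (isClosed_iInter fun x => ?_)))
  · refine isClosed_imp (hclopen a).isOpen ?_
    simp only [Set.ofPred_forall]
    exact isClosed_iInter fun b => isClosed_imp (hclopen b).isOpen (hclopen (a * b)).isClosed
  · exact (hclopen x).isClosed.union ((hclopen x⁻¹).isClosed.union isClosed_const)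
  · exact isClosed_imp (hclopen x).isOpen (hclopen x⁻¹).compl.isClosed

instance : CompactSpace (ConeSpace G) := isCompact_iff_compactSpace.1 isClosed_isPosCone.isCompact

instance : MulAction G (ConeSpace G) where
  smul g f := ⟨f.1 ∘ MulAut.conj g⁻¹, f.2.preimage (MulAut.conj g⁻¹)⟩
  one_smul f := Subtype.ext (funext fun x => congrArg f.1 (by simp))
  mul_smul g h f := Subtype.ext (funext fun x => congrArg f.1 (by simp [mul_assoc]))

lemma smul_apply (g : G) (f : ConeSpace G) (x : G) : (g • f).1 x = f.1 (g⁻¹ * x * g) :=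
  congrArg f.1 (by simp)

instance : ContinuousConstSMul G (ConeSpace G) where
  continuous_const_smul g := by
    refine Continuous.subtype_mk (continuous_pi fun x => ?_) _
    exact (continuous_apply (MulAut.conj g⁻¹ x)).comp continuous_subtype_val

lemma countable (hc : {P : Set G | IsPosCone P}.Countable) : Countable (ConeSpace G) :=
  have := hc.to_subtype
  Function.Injective.countable
    (f := fun f : ConeSpace G => (⟨{x | f.1 x = true}, f.2⟩ : {P : Set G | IsPosCone P}))
    fun _ _ hff' => Subtype.ext <| funext fun x =>
      Bool.eq_iff_iff.2 (Set.ext_iff.1 (congrArg Subtype.val hff') x)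

lemma nonempty (hP : IsPosCone P) : Nonempty (ConeSpace G) := by
  classical
  exact ⟨⟨fun x => decide (x ∈ P), by simpa only [decide_eq_true_eq, Set.ofPred_mem_eq] using hP⟩⟩

end ConeSpace

/-- `P` is the positive cone of a Conradian order: for positive `a` and `b`, some power of `b`
satisfies `b < a * b ^ n`. -/
def IsConradian (P : Set G) : Prop := ∀ a ∈ P, ∀ b ∈ P, ∃ n : ℕ, b⁻¹ * a * b ^ n ∈ P

lemma isConradian_of_exists_pow (h : IsRelCone ⊥ ⊤ P)
    (hpow : ∀ b : G, ∃ n : ℕ, ∀ a ∈ P, (b ^ (n + 1))⁻¹ * a * b ^ (n + 1) ∈ P) :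
    IsConradian P := by
  intro a ha b hb
  obtain ⟨n, hn⟩ := hpow b
  refine ⟨n + 1, ?_⟩
  rcases eq_or_ne n 0 with rfl | hn0
  · simpa only [zero_add, pow_one] using hn a ha
  · have hprod := h.mul_mem (h.pow_mem hb hn0) (hn a ha)
    rwa [pow_succ' b n, mul_inv_rev, mul_assoc, mul_assoc, mul_inv_cancel_left, ← pow_succ' b n,
      ← mul_assoc] at hprod

theorem exists_isConradian (hc : {P : Set G | IsPosCone P}.Countable)
    (hP : IsPosCone P) : ∃ Q : Set G, IsRelCone ⊥ ⊤ Q ∧ IsConradian Q := by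
  have := ConeSpace.countable hc
  have := ConeSpace.nonempty hP
  obtain ⟨f, hf⟩ := exists_finite_orbit G (X := ConeSpace G)
  have hcone := isPosCone_iff_isRelCone.1 f.2
  refine ⟨_, hcone, isConradian_of_exists_pow hcone fun b => ?_⟩
  have hindex : (MulAction.stabilizer G f).index ≠ 0 := by
    rw [MulAction.index_stabilizer]
    exact (Set.ncard_pos hf).2 (MulAction.nonempty_orbit f) |>.ne'
  obtain ⟨n, hn, -, hstab⟩ := Subgroup.exists_pow_mem_of_index_ne_zero hindex b
  obtain ⟨n, rfl⟩ := Nat.exists_eq_succ_of_ne_zero hn.ne'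
  refine ⟨n, fun a ha => ?_⟩
  rw [Set.mem_ofPred_eq, ← ConeSpace.smul_apply, MulAction.mem_stabilizer_iff.1 hstab]
  exact ha

end ConradianCones

/-- `C < E` is a jump of the order with positive cone `P`: both subgroups are convex, and no convex
subgroup lies strictly between them. -/
structure IsJump {G : Type*} [Group G] (P : Set G) (C E : Subgroup G) : Prop where
  convex_left : IsConvexFor C P
  convex_right : IsConvexFor E P
  lt : C < E
  le_of_lt {F : Subgroup G} : IsConvexFor F P → F < E → F ≤ C

section Jumps

variable {G : Type*} [Group G] {C E : Subgroup G} {P : Set G} {a b : G}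

lemma exists_isJump (h : IsRelCone ⊥ ⊤ P) (hfin : {C : Subgroup G | IsConvexFor C P}.Finite)
    (hE : IsConvexFor E P) (hne : E ≠ ⊥) : ∃ C, IsJump P C E := by
  obtain ⟨C, ⟨hC, hCE⟩, hmax⟩ := (hfin.subset (Set.sep_subset _ (· < E))).exists_maximal
    ⟨⊥, IsConvexFor.bot h, bot_lt_iff_ne_bot.2 hne⟩
  exact ⟨C, hC, hE, hCE, fun hF hFE => (hC.le_total h hF).elim (hmax ⟨hF, hFE⟩) id⟩

lemma convex_induction (h : IsRelCone ⊥ ⊤ P) (hfin : {C : Subgroup G | IsConvexFor C P}.Finite)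
    {p : Subgroup G → Prop} (bot : p ⊥) (jump : ∀ C E, IsJump P C E → p C → p E)
    (hE : IsConvexFor E P) : p E := by
  refine (hfin.wellFoundedOn (r := (· < ·))).induction hE fun E hE ih => ?_
  rcases eq_or_ne E ⊥ with rfl | hne
  · exact bot
  · obtain ⟨C, hCE⟩ := exists_isJump h hfin hE hne
    exact jump C E hCE (ih C hCE.convex_left hCE.lt)

lemma IsJump.isRelCone (hj : IsJump P C E) (h : IsRelCone ⊥ ⊤ P) :
    IsRelCone C E ((P \ C) ∩ E) :=
  (h.sdiff bot_le le_top hj.convex_left).inter hj.lt.le le_top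

namespace IsConradian

lemma inv_mul_mul_sq_mem (hP : IsConradian P) (h : IsRelCone ⊥ ⊤ P) (ha : a ∈ P) (hb : b ∈ P) :
    b⁻¹ * a * b ^ 2 ∈ P := by
  obtain ⟨n, hn⟩ := hP a ha (a * b) (h.mul_mem ha hb)
  refine h.mem_of_pow_mem (Subgroup.mem_top _) (n := n) ?_
  have hconj : b⁻¹ * a * b ^ 2 = b⁻¹ * (a * b) * b⁻¹⁻¹ := by
    simp only [inv_inv, pow_two, mul_assoc]
  rw [hconj, conj_pow, inv_inv]
  refine h.mul_mem ?_ hb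
  rwa [mul_inv_rev, inv_mul_cancel_right] at hn

lemma exists_mul_lt_pow (hP : IsConradian P) (h : IsRelCone ⊥ ⊤ P) (ha : a ∈ P) {x y : G}
    (hx : ∃ n : ℕ, x⁻¹ * a ^ n ∈ P) (hy : ∃ n : ℕ, y⁻¹ * a ^ n ∈ P) :
    ∃ n : ℕ, (x * y)⁻¹ * a ^ n ∈ P := by
  obtain ⟨n, hn⟩ := hx
  obtain ⟨m, hm⟩ := hy
  obtain ⟨k, hk⟩ := hP _ hn _ (h.pow_mem ha m.succ_ne_zero)
  refine ⟨n + (m + 1) * k, ?_⟩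
  have hprod := h.mul_mem (h.mul_mem hm ha) hk
  rw [mul_assoc _ _ a, ← pow_succ] at hprod
  simp only [mul_assoc, Nat.succ_eq_add_one, ← pow_mul, mul_inv_cancel_left] at hprod
  simpa only [pow_add, mul_inv_rev, mul_assoc] using hprod

/-- The hull is `{x | a⁻ⁿ < x < aⁿ for some n}`; the Conrad property makes it a subgroup. -/
lemma exists_hull (hP : IsConradian P) (h : IsRelCone ⊥ ⊤ P) (ha : a ∈ P) :
    ∃ I : Subgroup G, IsConvexFor I P ∧ a ∈ I ∧ ∀ x ∈ I, ∃ n : ℕ, x⁻¹ * a ^ n ∈ P := by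
  let I : Subgroup G :=
    { carrier := {x | (∃ n : ℕ, x⁻¹ * a ^ n ∈ P) ∧ ∃ n : ℕ, x⁻¹⁻¹ * a ^ n ∈ P}
      one_mem' := ⟨⟨1, by simpa⟩, ⟨1, by simpa⟩⟩
      mul_mem' := fun {x y} hx hy =>
        ⟨hP.exists_mul_lt_pow h ha hx.1 hy.1, mul_inv_rev x y ▸ hP.exists_mul_lt_pow h ha hy.2 hx.2⟩
      inv_mem' := fun {x} hx => ⟨hx.2, (inv_inv x).symm ▸ hx.1⟩ }
  refine ⟨I, fun x hx y hy hxy => ?_, ?_, fun x hx => hx.1⟩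
  · obtain ⟨n, hn⟩ := hxy.1
    exact ⟨⟨n, by simpa [mul_assoc] using h.mul_mem hy hn⟩, ⟨0, by simpa⟩⟩
  · exact ⟨⟨2, by simpa [pow_two]⟩, ⟨0, by simpa⟩⟩

lemma exists_lt_pow (hP : IsConradian P) (h : IsRelCone ⊥ ⊤ P) (hj : IsJump P C E) (ha : a ∈ P)
    (haC : a ∉ C) (hb : b ∈ E) : ∃ n : ℕ, b⁻¹ * a ^ n ∈ P := by
  obtain ⟨I, hI, haI, hIlt⟩ := hP.exists_hull h ha
  rcases hI.le_total h hj.convex_right with hIE | hEI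
  · rcases hIE.eq_or_lt with rfl | hIE
    · exact hIlt b hb
    · exact absurd (hj.le_of_lt hI hIE haI) haC
  · exact hIlt b (hEI hb)

lemma exists_lt_pow_section (hP : IsConradian P) (h : IsRelCone ⊥ ⊤ P) (hj : IsJump P C E)
    (ha : a ∈ (P \ C) ∩ E) (hb : b ∈ E) : ∃ n : ℕ, b⁻¹ * a ^ n ∈ (P \ C) ∩ E := by
  obtain ⟨n, hn⟩ := hP.exists_lt_pow h hj ha.1.1 ha.1.2 hb
  by_cases hnC : b⁻¹ * a ^ n ∈ C
  · refine ⟨n + 1, ?_⟩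
    rw [pow_succ, ← mul_assoc]
    exact (hj.isRelCone h).mul_mem_left hnC ha
  · exact ⟨n, ⟨hn, hnC⟩, E.mul_mem (E.inv_mem hb) (E.pow_mem ha.2 n)⟩

lemma conj_mem_of_pos (hP : IsConradian P) (h : IsRelCone ⊥ ⊤ P) (hj : IsJump P C E) {g c : G}
    (hg : g ∈ E) (hc : c ∈ C) (hpos : g * c * g⁻¹ ∈ P) : g * c * g⁻¹ ∈ C := by
  by_contra hconj
  have hPC := h.sdiff bot_le le_top hj.convex_left
  have hgC : g ∉ C := fun hgC => hconj (C.mul_mem (C.mul_mem hgC hc) (C.inv_mem hgC))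
  rcases hPC.total (Subgroup.mem_top g) with hgP | hgP | hgC'
  · obtain ⟨n, hn⟩ := hP.exists_lt_pow h hj hpos hconj hg
    refine h.inv_notMem (hPC.mul_mem_right hgP (C.inv_mem (C.pow_mem hc n))).1 ?_
    rw [conj_pow] at hn
    simpa [mul_assoc] using hn
  · obtain ⟨n, hn⟩ := hP.exists_lt_pow h hj hpos hconj (E.pow_mem (E.inv_mem hg) 2)
    have hlt := (hPC.mul_mem_left (C.inv_mem (C.pow_mem hc n)) hgP).1
    refine h.inv_notMem (hP.inv_mul_mul_sq_mem h hlt hgP.1) ?_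
    rw [conj_pow] at hn
    simpa [mul_assoc] using hn
  · exact hgC hgC'

lemma le_normalizer (hP : IsConradian P) (h : IsRelCone ⊥ ⊤ P) (hj : IsJump P C E) :
    E ≤ Subgroup.normalizer (C : Set G) := by
  refine Subgroup.le_normalizer_iff.2 fun g hg c hc => ?_
  rcases h.total (Subgroup.mem_top (g * c * g⁻¹)) with hpos | hneg | hone
  · exact hP.conj_mem_of_pos h hj hg hc hpos
  · rw [← C.inv_mem_iff]
    have hinv : (g * c * g⁻¹)⁻¹ = g * c⁻¹ * g⁻¹ := by group
    rw [hinv] at hneg ⊢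
    exact hP.conj_mem_of_pos h hj hg (C.inv_mem hc) hneg
  · exact Subgroup.mem_bot.1 hone ▸ C.one_mem

end IsConradian

end Jumps

section ArchimedeanGroups

variable {G : Type*} [Group G]

section LinearOrder

variable [LinearOrder G] [MulLeftMono G] [MulRightMono G]

lemma exists_zpow_le_lt {d : G} (hd : 1 < d) (harch : ∀ x : G, ∃ n : ℕ, x ≤ d ^ n) (x : G) :
    ∃ m : ℤ, d ^ m ≤ x ∧ x < d ^ (m + 1) := by
  have hmono : StrictMono fun m : ℤ => d ^ m := strictMono_int_of_lt_succ fun m => by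
    rw [zpow_add_one]
    exact lt_mul_of_one_lt_right' _ hd
  obtain ⟨n, hn⟩ := harch x
  obtain ⟨k, hk⟩ := harch x⁻¹
  obtain ⟨m, hm, hmax⟩ := Int.exists_greatest_of_bdd (P := fun m : ℤ => d ^ m ≤ x)
    ⟨n, fun z hz => hmono.le_iff_le.1 (hz.trans (by rwa [zpow_natCast]))⟩
    ⟨-k, by rw [zpow_neg, zpow_natCast]; exact inv_le_of_inv_le' hk⟩
  exact ⟨m, hm, lt_of_not_ge fun hle => (hmax _ hle).not_gt (Int.lt_succ m)⟩

lemma commute_of_isLeast {d : G} (hd : IsLeast {x : G | 1 < x} d)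
    (harch : ∀ x : G, ∃ n : ℕ, x ≤ d ^ n) (x y : G) : Commute x y := by
  have eq_zpow (x : G) : ∃ m : ℤ, x = d ^ m := by
    obtain ⟨m, hle, hlt⟩ := exists_zpow_le_lt hd.1 harch x
    refine ⟨m, hle.antisymm' (le_of_not_gt fun hgt => hlt.not_ge ?_)⟩
    rw [zpow_add_one, ← le_inv_mul_iff_mul_le]
    exact hd.2 (by rwa [Set.mem_ofPred_eq, lt_inv_mul_iff_mul_lt, mul_one])
  obtain ⟨m, rfl⟩ := eq_zpow x
  obtain ⟨n, rfl⟩ := eq_zpow y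
  exact (Commute.refl d).zpow_zpow m n

lemma exists_one_lt_mul_self_le (hleast : ∀ d : G, ¬IsLeast {x : G | 1 < x} d) {c : G}
    (hc : 1 < c) : ∃ e : G, 1 < e ∧ e * e ≤ c := by
  have hlower : ¬c ∈ lowerBounds {x : G | 1 < x} := fun hle => hleast c ⟨hc, hle⟩
  simp only [mem_lowerBounds, Set.mem_ofPred_eq, not_forall, not_le] at hlower
  obtain ⟨d, hd, hdc⟩ := hlower
  rcases le_or_gt (d * d) c with hle | hgt
  · exact ⟨d, hd, hle⟩
  · refine ⟨d⁻¹ * c, by rwa [lt_inv_mul_iff_mul_lt, mul_one], ?_⟩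
    calc d⁻¹ * c * (d⁻¹ * c) ≤ d * (d⁻¹ * c) := by
          gcongr
          exact (inv_mul_lt_iff_lt_mul.2 hgt).le
      _ = c := mul_inv_cancel_left d c

/-- **Hölder's theorem.** If `y * x < x * y`, squeeze `x` and `y` between consecutive powers of some
`e > 1` with `e * e` at most the commutator: this bounds the commutator strictly by `e * e`. -/
theorem commute_of_archimedean (harch : ∀ a : G, 1 < a → ∀ x : G, ∃ n : ℕ, x ≤ a ^ n) (x y : G) :
    Commute x y := by
  by_cases! hleast : ∃ d : G, IsLeast {x : G | 1 < x} d
  · obtain ⟨d, hd⟩ := hleast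
    exact commute_of_isLeast hd (harch d hd.1) x y
  have le (x y : G) : x * y ≤ y * x := by
    by_contra! hlt
    obtain ⟨e, he, hele⟩ := exists_one_lt_mul_self_le hleast
      (by rwa [lt_inv_mul_iff_mul_lt, mul_one])
    obtain ⟨m, hmx, hxm⟩ := exists_zpow_le_lt he (harch e he) x
    obtain ⟨n, hny, hyn⟩ := exists_zpow_le_lt he (harch e he) y
    have hupper : x * y < e ^ (m + 1) * e ^ (n + 1) := mul_lt_mul_of_lt_of_lt hxm hyn
    refine hupper.not_ge ?_
    calc e ^ (m + 1) * e ^ (n + 1) = e ^ n * e ^ m * (e * e) := by group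
      _ ≤ y * x * ((y * x)⁻¹ * (x * y)) := by gcongr
      _ = x * y := mul_inv_cancel_left _ _
  exact (le x y).antisymm (le y x)

end LinearOrder

namespace IsRelCone

variable {P R : Set G} {C E : Subgroup G}

/-- The left order `x < y ↔ x⁻¹ * y ∈ P` with positive cone `P`. -/
noncomputable abbrev linearOrder (h : IsRelCone ⊥ ⊤ P) : LinearOrder G :=
  have : IsStrictTotalOrder G fun x y => x⁻¹ * y ∈ P :=
    { irrefl := fun x hx => h.disjoint hx (by simp)
      trans := fun x y z hxy hyz => by simpa [mul_assoc] using h.mul_mem hxy hyz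
      trichotomous := fun x y hxy hyx => by
        have := h.total (Subgroup.mem_top (x⁻¹ * y))
        rw [mul_inv_rev, inv_inv, Subgroup.mem_bot, inv_mul_eq_one] at this
        tauto }
  have : DecidableRel fun x y => x⁻¹ * y ∈ P := Classical.decRel _
  linearOrderOfSTO fun x y => x⁻¹ * y ∈ P

lemma inv_mul_mul_mem (h : IsRelCone ⊥ ⊤ P) (harch : ∀ a ∈ P, ∀ b : G, ∃ n : ℕ, b⁻¹ * a ^ n ∈ P)
    {a : G} (ha : a ∈ P) (b : G) : b⁻¹ * a * b ∈ P := by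
  have conj_mem {a b : G} (ha : a ∈ P) (hb : b ∈ P) : b⁻¹ * a * b ∈ P := by
    obtain ⟨n, hn⟩ := harch a ha b
    refine h.mem_of_pow_mem (Subgroup.mem_top _) (n := n) ?_
    have hpow : (b⁻¹ * a * b) ^ n = b⁻¹ * a ^ n * b := by
      simpa only [inv_inv] using conj_pow (a := b⁻¹) (b := a) (i := n)
    exact hpow ▸ h.mul_mem hn hb
  rcases h.total (Subgroup.mem_top b) with hb | hb | hb
  · exact conj_mem ha hb
  · rcases h.total (Subgroup.mem_top (b⁻¹ * a * b)) with hpos | hneg | hone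
    · exact hpos
    · exact absurd (by simpa [mul_assoc] using conj_mem hneg hb) (h.inv_notMem ha)
    · have ha1 : a = 1 := by simpa [mul_assoc, inv_mul_eq_one] using hone
      exact absurd (ha1 ▸ Subgroup.one_mem ⊥) (h.disjoint ha)
  · obtain rfl := Subgroup.mem_bot.1 hb
    simpa using ha

lemma commute_of_archimedean (h : IsRelCone ⊥ ⊤ P)
    (harch : ∀ a ∈ P, ∀ b : G, ∃ n : ℕ, b⁻¹ * a ^ n ∈ P) (x y : G) : Commute x y := by
  let := h.linearOrder
  have hlt (x y : G) : x < y ↔ x⁻¹ * y ∈ P := Iff.rfl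
  have : MulLeftStrictMono G := ⟨fun c x y hxy => by
    rw [hlt] at hxy ⊢
    simpa [mul_assoc] using hxy⟩
  have : MulRightStrictMono G := ⟨fun c x y hxy => by
    rw [hlt] at hxy
    simpa [Function.swap, hlt, mul_assoc] using h.inv_mul_mul_mem harch hxy c⟩
  have := covariantClass_le_of_lt G G (· * ·)
  have := covariantClass_le_of_lt G G (Function.swap (· * ·))
  refine _root_.commute_of_archimedean (fun a ha b => ?_) x y
  obtain ⟨n, hn⟩ := harch a (by simpa [hlt] using ha) b
  exact ⟨n, ((hlt _ _).2 hn).le⟩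

lemma mk_mem_image_mk {N : Subgroup G} (h : IsRelCone N ⊤ P) {x : G} :
    (x : G ⧸ N) ∈ ((↑) : G → G ⧸ N) '' P ↔ x ∈ P := by
  refine ⟨?_, Set.mem_image_of_mem _⟩
  rintro ⟨y, hy, hyx⟩
  simpa using h.mul_mem_right hy (QuotientGroup.eq.1 hyx)

lemma image_mk {N : Subgroup G} [N.Normal] (h : IsRelCone N ⊤ P) :
    IsRelCone ⊥ ⊤ (((↑) : G → G ⧸ N) '' P) where
  le := bot_le
  subset := Set.subset_univ _
  mul_mem := by
    rintro _ _ ⟨x, hx, rfl⟩ ⟨y, hy, rfl⟩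
    exact ⟨x * y, h.mul_mem hx hy, rfl⟩
  total {q} _ := by
    induction q using QuotientGroup.induction_on with | H x =>
    rw [h.mk_mem_image_mk, ← QuotientGroup.mk_inv, h.mk_mem_image_mk, Subgroup.mem_bot,
      QuotientGroup.eq_one_iff]
    exact h.total (Subgroup.mem_top x)
  disjoint := by
    rintro _ ⟨x, hx, rfl⟩ hx1
    exact h.disjoint hx ((QuotientGroup.eq_one_iff x).1 (Subgroup.mem_bot.1 hx1))

theorem commutator_le_of_archimedean (h : IsRelCone C E R)
    (hnorm : E ≤ Subgroup.normalizer (C : Set G))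
    (harch : ∀ a ∈ R, ∀ b ∈ E, ∃ n : ℕ, b⁻¹ * a ^ n ∈ R) : ⁅E, E⁆ ≤ C := by
  have : (C.subgroupOf E).Normal := (Subgroup.normal_subgroupOf_iff_le_normalizer h.le).2 hnorm
  have hE : IsRelCone (C.subgroupOf E) ⊤ (E.subtype ⁻¹' R) := by
    simpa only [Subgroup.comap_subtype, Subgroup.subgroupOf_self] using h.comap E.subtype
  refine Subgroup.commutator_le.2 fun x hx y hy => ?_
  have hcomm := hE.image_mk.commute_of_archimedean (fun a ha b => ?_)
    ((⟨x, hx⟩ : E) : E ⧸ C.subgroupOf E) ((⟨y, hy⟩ : E) : E ⧸ C.subgroupOf E)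
  · rw [← commutatorElement_eq_one_iff_commute] at hcomm
    exact (QuotientGroup.eq_one_iff (_ : E)).1 hcomm
  · obtain ⟨a, ha, rfl⟩ := ha
    induction b using QuotientGroup.induction_on with | H b =>
    obtain ⟨n, hn⟩ := harch a ha b b.2
    exact ⟨n, b⁻¹ * a ^ n, hn, rfl⟩

end IsRelCone

end ArchimedeanGroups

/-- `φ` restricts to a homomorphism from `E` to the additive group `A`; its values outside `E` are
irrelevant. -/
def IsHomOn {G A : Type*} [Group G] [Add A] (E : Subgroup G) (φ : G → A) : Prop :=
  ∀ x ∈ E, ∀ y ∈ E, φ (x * y) = φ x + φ y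

/-- `φ` induces an embedding of the section `E / C` into the additive group `A`. -/
structure IsSectionEmbedding {G A : Type*} [Group G] [AddCommGroup A] (C E : Subgroup G)
    (φ : G → A) : Prop where
  le : C ≤ E
  isHomOn : IsHomOn E φ
  eq_zero_iff {x : G} : x ∈ E → (φ x = 0 ↔ x ∈ C)

section SectionEmbeddings

universe u

variable {G : Type u} [Group G] {C E : Subgroup G} {P : Set G} {x y : G}

namespace IsHomOn

variable {A : Type*} [AddCommGroup A] {φ : G → A}

lemma map_one (hφ : IsHomOn E φ) : φ 1 = 0 := by
  simpa using hφ 1 E.one_mem 1 E.one_mem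

lemma map_inv (hφ : IsHomOn E φ) (hx : x ∈ E) : φ x⁻¹ = -φ x := by
  have hmul := hφ x hx x⁻¹ (E.inv_mem hx)
  rw [mul_inv_cancel, hφ.map_one] at hmul
  exact (neg_eq_of_add_eq_zero_right hmul.symm).symm

lemma map_pow (hφ : IsHomOn E φ) (hx : x ∈ E) (n : ℕ) : φ (x ^ n) = n • φ x := by
  induction n with
  | zero => rw [pow_zero, hφ.map_one, zero_nsmul]
  | succ n ih => rw [pow_succ, hφ _ (E.pow_mem hx n) _ hx, ih, succ_nsmul]

lemma map_zpow (hφ : IsHomOn E φ) (hx : x ∈ E) (n : ℤ) : φ (x ^ n) = n • φ x := by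
  cases n with
  | ofNat n => simpa using hφ.map_pow hx n
  | negSucc n =>
    rw [zpow_negSucc, hφ.map_inv (E.pow_mem hx _), hφ.map_pow hx, negSucc_zsmul]

lemma map_commutator (hφ : IsHomOn E φ) (hx : x ∈ E) (hy : y ∈ E) : φ (x * y * x⁻¹ * y⁻¹) = 0 := by
  rw [hφ _ (E.mul_mem (E.mul_mem hx hy) (E.inv_mem hx)) _ (E.inv_mem hy),
    hφ _ (E.mul_mem hx hy) _ (E.inv_mem hx), hφ x hx y hy, hφ.map_inv hx, hφ.map_inv hy]
  abel

/-- The kernel in `E` of a map that is a homomorphism on `E`. -/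
def ker (hφ : IsHomOn E φ) : Subgroup G where
  carrier := {x | x ∈ E ∧ φ x = 0}
  one_mem' := ⟨E.one_mem, hφ.map_one⟩
  mul_mem' := fun {x y} hx hy =>
    ⟨E.mul_mem hx.1 hy.1, by rw [hφ x hx.1 y hy.1, hx.2, hy.2, add_zero]⟩
  inv_mem' := fun hx => ⟨E.inv_mem hx.1, by rw [hφ.map_inv hx.1, hx.2, neg_zero]⟩

variable [LinearOrder A] [IsOrderedAddMonoid A]

lemma isRelCone_pos (hφ : IsHomOn E φ) : IsRelCone hφ.ker E {x | x ∈ E ∧ 0 < φ x} where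
  le := fun _ hx => hx.1
  subset := fun _ hx => hx.1
  mul_mem := fun {a b} ha hb =>
    ⟨E.mul_mem ha.1 hb.1, by rw [hφ a ha.1 b hb.1]; exact add_pos ha.2 hb.2⟩
  total := fun {x} hx => by
    rcases lt_trichotomy 0 (φ x) with hpos | hzero | hneg
    · exact .inl ⟨hx, hpos⟩
    · exact .inr (.inr ⟨hx, hzero.symm⟩)
    · exact .inr (.inl ⟨E.inv_mem hx, by rwa [hφ.map_inv hx, neg_pos]⟩)
  disjoint := fun hx hxK => hx.2.ne' hxK.2

lemma exists_isRelCone (hφ : IsHomOn E φ) (hP : IsRelCone C E P) (hC : ∀ c ∈ C, φ c = 0) :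
    ∃ Q, IsRelCone C E Q ∧ ∀ x ∈ E, 0 < φ x → x ∈ Q :=
  have hker : IsRelCone C hφ.ker (P ∩ hφ.ker) :=
    hP.inter (fun c hc => ⟨hP.le hc, hC c hc⟩) fun _ hx => hx.1
  ⟨_, hker.union hφ.isRelCone_pos, fun _ hx hpos => .inl ⟨hx, hpos⟩⟩

end IsHomOn

lemma exists_isSectionEmbedding (hCE : C ≤ E) (hcomm : ⁅E, E⁆ ≤ C) :
    ∃ (A : Type u) (_ : AddCommGroup A) (f : G → A), IsSectionEmbedding C E f := by
  classical
  have hle : commutator E ≤ C.subgroupOf E :=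
    Subgroup.map_le_iff_le_comap.1 ((Subgroup.map_subtype_commutator E).trans_le hcomm)
  have : (C.subgroupOf E).Normal := Subgroup.Normal.of_commutator_le (G := E) hle
  have := Subgroup.Normal.quotient_commutative_iff_commutator_le.2 hle
  let : CommGroup (E ⧸ C.subgroupOf E) := { mul_comm := mul_comm' }
  let f (x : G) : Additive (E ⧸ C.subgroupOf E) :=
    if hx : x ∈ E then .ofMul ((⟨x, hx⟩ : E) : E ⧸ C.subgroupOf E) else 0
  have f_mem {x : G} (hx : x ∈ E) : f x = .ofMul ((⟨x, hx⟩ : E) : E ⧸ C.subgroupOf E) := dif_pos hx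
  refine ⟨_, _, f, hCE, fun x hx y hy => ?_, fun {x} hx => ?_⟩
  · rw [f_mem hx, f_mem hy, f_mem (E.mul_mem hx hy)]
    rfl
  · rw [f_mem hx, ofMul_eq_zero, QuotientGroup.eq_one_iff]
    rfl

lemma exists_addMonoidHom_of_linearIndependent {ι Q A : Type*} [AddCommGroup Q] [AddCommGroup A]
    [DivisibleBy A ℤ] {v : ι → Q} (hv : LinearIndependent ℤ v) (u : ι → A) :
    ∃ φ : Q →+ A, ∀ i, φ (v i) = u i := by
  obtain ⟨φ, hφ⟩ := (Module.Baer.of_divisible A).extension_property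
    (Finsupp.linearCombination ℤ v) hv (Finsupp.linearCombination ℤ u)
  refine ⟨φ.toAddMonoidHom, fun i => ?_⟩
  simpa using LinearMap.congr_fun hφ (Finsupp.single i 1)

namespace IsSectionEmbedding

variable {A : Type*} [AddCommGroup A] {f : G → A}

lemma isHomOn_comp (hf : IsSectionEmbedding C E f) {B : Type*} [AddCommGroup B] (φ : A →+ B) :
    IsHomOn E (φ ∘ f) := fun x hx y hy => by
  simp only [Function.comp_apply, hf.isHomOn x hx y hy, map_add]

/-- If `f x` and `f y` were independent, every real `α` would give an order in which `x ^ m * y ^ n`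
is positive whenever `m + n * α` is. -/
lemma not_linearIndependent (hf : IsSectionEmbedding C E f) (hP : IsRelCone C E P)
    (hcount : {Q : Set G | IsRelCone C E Q}.Countable) (hx : x ∈ E) (hy : y ∈ E) :
    ¬LinearIndependent ℤ ![f x, f y] := fun hind => by
  have exists_slope (α : ℝ) : ∃ Q, IsRelCone C E Q ∧
      ∀ m n : ℤ, 0 < (m : ℝ) + n * α → x ^ m * y ^ n ∈ Q := by
    obtain ⟨φ, hφ⟩ := exists_addMonoidHom_of_linearIndependent hind ![(1 : ℝ), α]
    have hφx : φ (f x) = 1 := hφ 0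
    have hφy : φ (f y) = α := hφ 1
    obtain ⟨Q, hQ, hpos⟩ := (hf.isHomOn_comp φ).exists_isRelCone hP fun c hc => by
      rw [Function.comp_apply, (hf.eq_zero_iff (hP.le hc)).2 hc, map_zero]
    refine ⟨Q, hQ, fun m n hmn => hpos _ (E.mul_mem (E.zpow_mem hx m) (E.zpow_mem hy n)) ?_⟩
    rw [hf.isHomOn_comp φ _ (E.zpow_mem hx m) _ (E.zpow_mem hy n), (hf.isHomOn_comp φ).map_zpow hx,
      (hf.isHomOn_comp φ).map_zpow hy]
    simpa only [Function.comp_apply, hφx, hφy, zsmul_eq_mul, mul_one] using hmn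
  choose Q hQ hpos using exists_slope
  have hinj : Function.Injective Q := Function.Injective.of_lt_imp_ne fun α β hαβ heq => by
    obtain ⟨q, hαq, hqβ⟩ := exists_rat_btwn hαβ
    have hden : (0 : ℝ) < q.den := by exact_mod_cast q.pos
    have hq : (q : ℝ) * q.den = q.num := by exact_mod_cast q.mul_den_eq_num
    have hα := hpos α q.num (-q.den) (by push_cast; nlinarith)
    have hβ := hpos β (-q.num) q.den (by push_cast; nlinarith)
    have hmem := (hQ α).mul_mem hα (heq ▸ hβ)
    refine (hQ α).disjoint hmem ((hf.eq_zero_iff ((hQ α).subset hmem)).1 ?_)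
    rw [hf.isHomOn _ ((hQ α).subset hα) _ ((hQ β).subset hβ)]
    simp only [hf.isHomOn _ (E.zpow_mem hx _) _ (E.zpow_mem hy _), hf.isHomOn.map_zpow hx,
      hf.isHomOn.map_zpow hy, neg_zsmul]
    abel
  have : Countable {Q : Set G | IsRelCone C E Q} := hcount.to_subtype
  exact not_countable ((Set.injective_codRestrict (s := {Q | IsRelCone C E Q}) hQ).2 hinj).countable

end IsSectionEmbedding

/-- Divisibility of `ℚ` extends a homomorphism from a nontrivial cyclic subgroup of the rank-one
section to the whole of it. -/
theorem exists_ratEmbedding_of_commutator_le (hP : IsRelCone C E P)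
    (hcount : {Q : Set G | IsRelCone C E Q}.Countable) (hcomm : ⁅E, E⁆ ≤ C) :
    ∃ ι : G → ℚ, IsSectionEmbedding C E ι := by
  obtain ⟨A, _, f, hf⟩ := exists_isSectionEmbedding hP.le hcomm
  have smul_eq_zero {x : G} (hx : x ∈ E) {n : ℤ} (hn : n ≠ 0) (hnx : n • f x = 0) : f x = 0 := by
    refine (hf.eq_zero_iff hx).2 (hP.isolated hx (Int.natAbs_ne_zero.2 hn) ?_)
    rw [← hf.eq_zero_iff (E.pow_mem hx _), hf.isHomOn.map_pow hx, ← natCast_zsmul]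
    rcases n.natAbs_eq with h | h <;> rw [h] at hnx <;> simpa using hnx
  by_cases! hb : ∃ b ∈ E, f b ≠ 0
  · obtain ⟨b, hbE, hb⟩ := hb
    have hind : LinearIndependent ℤ fun _ : Unit => f b := by
      refine Fintype.linearIndependent_iff.2 fun n hn _ => by_contra fun hne => hb ?_
      exact smul_eq_zero hbE hne (by simpa using hn)
    obtain ⟨φ, hφ⟩ := exists_addMonoidHom_of_linearIndependent hind fun _ => (1 : ℚ)
    refine ⟨φ ∘ f, hf.le, hf.isHomOn_comp φ, fun {x} hx => ?_⟩
    rw [← hf.eq_zero_iff hx, Function.comp_apply]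
    refine ⟨fun hφx => ?_, fun hfx => by rw [hfx, map_zero]⟩
    have hdep := hf.not_linearIndependent hP hcount hx hbE
    simp only [LinearIndependent.pair_iff, not_forall] at hdep
    obtain ⟨m, n, hmn, hne⟩ := hdep
    have hn : n = 0 := by simpa [hφx, hφ ()] using congrArg φ hmn
    subst hn
    exact smul_eq_zero hx (fun hm => hne ⟨hm, rfl⟩) (by simpa using hmn)
  · exact ⟨fun _ => 0, hf.le, fun _ _ _ _ => (add_zero 0).symm, fun hx => by
      rw [← hf.eq_zero_iff hx, hb _ hx]; simp⟩

namespace IsSectionEmbedding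

variable {κ : G → ℚ}

lemma exists_smul_eq (hκ : IsSectionEmbedding C E κ) {V : Type*} [AddCommGroup V] [Module ℚ V]
    {ψ : G → V} (hψ : IsHomOn E ψ) (hC : ∀ c ∈ C, ψ c = 0) :
    ∃ v : V, ∀ x ∈ E, ψ x = κ x • v := by
  by_cases! hb : ∃ b ∈ E, κ b ≠ 0
  · obtain ⟨b, hbE, hb⟩ := hb
    refine ⟨(κ b)⁻¹ • ψ b, fun x hx => ?_⟩
    obtain ⟨q, hq⟩ : ∃ q : ℚ, κ x = q * κ b := ⟨κ x / κ b, (div_mul_cancel₀ _ hb).symm⟩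
    have hmem : x ^ (q.den : ℤ) * b ^ (-q.num) ∈ C := by
      rw [← hκ.eq_zero_iff (E.mul_mem (E.zpow_mem hx _) (E.zpow_mem hbE _)),
        hκ.isHomOn _ (E.zpow_mem hx _) _ (E.zpow_mem hbE _), hκ.isHomOn.map_zpow hx,
        hκ.isHomOn.map_zpow hbE, hq, zsmul_eq_mul, zsmul_eq_mul]
      push_cast
      rw [← q.mul_den_eq_num]
      ring
    have hψx := hC _ hmem
    rw [hψ _ (E.zpow_mem hx _) _ (E.zpow_mem hbE _), hψ.map_zpow hx, hψ.map_zpow hbE,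
      ← Int.cast_smul_eq_zsmul ℚ, ← Int.cast_smul_eq_zsmul ℚ, Int.cast_neg, neg_smul,
      ← sub_eq_add_neg, sub_eq_zero, ← q.mul_den_eq_num, mul_comm, mul_smul] at hψx
    have hden : (q.den : ℚ) ≠ 0 := by exact_mod_cast q.den_nz
    rw [smul_smul, hq, mul_inv_cancel_right₀ hb]
    exact smul_right_injective V hden (by simpa using hψx)
  · exact ⟨0, fun x hx => by rw [smul_zero, hC x ((hκ.eq_zero_iff hx).1 (hb x hx))]⟩

end IsSectionEmbedding

end SectionEmbeddings

section RankOne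

variable {G : Type*} [Group G] {C D E : Subgroup G} {Q R : Set G} {ι κ L : G → ℚ} {b c g x y : G}

namespace IsSectionEmbedding

lemma exists_pow_mul_inv_pow_mem (hκ : IsSectionEmbedding C E κ) (hx : x ∈ E) (hy : y ∈ E)
    (hpos : 0 < κ x * κ y) : ∃ m n : ℕ, m ≠ 0 ∧ n ≠ 0 ∧ x ^ m * (y ^ n)⁻¹ ∈ C := by
  have hy0 : κ y ≠ 0 := right_ne_zero_of_mul hpos.ne'
  obtain ⟨q, hq⟩ : ∃ q : ℚ, κ x = q * κ y := ⟨κ x / κ y, (div_mul_cancel₀ _ hy0).symm⟩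
  have hq0 : 0 < q := by
    rw [hq, mul_assoc] at hpos
    exact pos_of_mul_pos_left hpos (mul_self_nonneg _)
  have hnum : (q.num.toNat : ℚ) = q * q.den := by
    rw [q.mul_den_eq_num]
    exact_mod_cast Int.toNat_of_nonneg (Rat.num_nonneg.2 hq0.le)
  refine ⟨q.den, q.num.toNat, q.den_nz, by simpa using hq0, ?_⟩
  have hxm := E.pow_mem hx q.den
  have hyn := E.pow_mem hy q.num.toNat
  rw [← hκ.eq_zero_iff (E.mul_mem hxm (E.inv_mem hyn)), hκ.isHomOn _ hxm _ (E.inv_mem hyn),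
    hκ.isHomOn.map_inv hyn, hκ.isHomOn.map_pow hx, hκ.isHomOn.map_pow hy, hq, nsmul_eq_mul,
    nsmul_eq_mul, hnum]
  ring

lemma mul_pos (hι : IsSectionEmbedding C E ι) (hR : IsRelCone C E R) (hx : x ∈ R) (hy : y ∈ R) :
    0 < ι x * ι y := by
  have ne_zero {z : G} (hz : z ∈ R) : ι z ≠ 0 := fun h0 =>
    hR.disjoint hz ((hι.eq_zero_iff (hR.subset hz)).1 h0)
  refine lt_of_not_ge fun hle => ?_
  obtain ⟨m, n, hm, hn, hmn⟩ := hι.exists_pow_mul_inv_pow_mem (hR.subset hx)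
    (E.inv_mem (hR.subset hy)) <| by
      rw [hι.isHomOn.map_inv (hR.subset hy), mul_neg, neg_pos]
      exact hle.lt_of_ne (mul_ne_zero (ne_zero hx) (ne_zero hy))
  rw [inv_pow, inv_inv] at hmn
  exact hR.disjoint (hR.mul_mem (hR.pow_mem hx hm) (hR.pow_mem hy hn)) hmn

lemma mem_iff_mul_pos (hι : IsSectionEmbedding C E ι) (hR : IsRelCone C E R) (hb : b ∈ R)
    (hx : x ∈ E) : x ∈ R ↔ 0 < ι x * ι b := by
  refine ⟨fun hxR => hι.mul_pos hR hxR hb, fun hpos => ?_⟩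
  rcases hR.total hx with hxR | hxR | hxC
  · exact hxR
  · have hneg := hι.mul_pos hR hxR hb
    rw [hι.isHomOn.map_inv hx] at hneg
    linarith
  · rw [(hι.eq_zero_iff hx).2 hxC, zero_mul] at hpos
    exact absurd hpos (lt_irrefl 0)

lemma finite_isRelCone (hι : IsSectionEmbedding C E ι) : {R : Set G | IsRelCone C E R}.Finite := by
  refine (Set.toFinite {∅, {x | x ∈ E ∧ 0 < ι x}, {x | x ∈ E ∧ ι x < 0}}).subset fun R hR => ?_
  rcases R.eq_empty_or_nonempty with rfl | ⟨b, hb⟩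
  · exact .inl rfl
  have mem_iff {x : G} : x ∈ R ↔ x ∈ E ∧ 0 < ι x * ι b :=
    ⟨fun hx => ⟨hR.subset hx, hι.mul_pos hR hx hb⟩,
      fun hx => (hι.mem_iff_mul_pos hR hb hx.1).2 hx.2⟩
  rcases lt_trichotomy (ι b) 0 with hneg | hzero | hpos
  · refine .inr (.inr (Set.ext fun x => ?_))
    rw [mem_iff, Set.mem_ofPred_eq, ← neg_mul_neg, mul_pos_iff_of_pos_right (neg_pos.2 hneg),
      neg_pos]
  · exact absurd ((hι.eq_zero_iff (hR.subset hb)).1 hzero) (hR.disjoint hb)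
  · refine .inr (.inl (Set.ext fun x => ?_))
    rw [mem_iff, mul_pos_iff_of_pos_right hpos, Set.mem_ofPred_eq]

lemma conj_mem (hκ : IsSectionEmbedding C E κ) (hg : g ∈ E) (hc : c ∈ C) : g * c * g⁻¹ ∈ C := by
  have hcE := hκ.le hc
  rw [← hκ.eq_zero_iff (E.mul_mem (E.mul_mem hg hcE) (E.inv_mem hg)),
    hκ.isHomOn _ (E.mul_mem hg hcE) _ (E.inv_mem hg), hκ.isHomOn g hg c hcE, hκ.isHomOn.map_inv hg,
    (hκ.eq_zero_iff hcE).2 hc, add_zero, add_neg_cancel]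

end IsSectionEmbedding

/-- Consecutive rank-one sections `C / D` and `E / C`, embedded into `ℚ` by `ι` and `κ`, such that
conjugation by `g ∈ E` multiplies `C / D ⊆ ℚ` by `L g`. -/
structure IsRankOneTower (D C E : Subgroup G) (ι κ L : G → ℚ) : Prop where
  lt_left : D < C
  lt_right : C < E
  left : IsSectionEmbedding D C ι
  right : IsSectionEmbedding C E κ
  map_conj {g c : G} : g ∈ E → c ∈ C → ι (g * c * g⁻¹) = L g * ι c

lemma exists_isRankOneTower (hDC : D < C) (hCE : C < E) (hι : IsSectionEmbedding D C ι)
    (hκ : IsSectionEmbedding C E κ) (hnorm : E ≤ Subgroup.normalizer (D : Set G)) :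
    ∃ L, IsRankOneTower D C E ι κ L := by
  have exists_multiplier (g : G) : ∃ q : ℚ, g ∈ E → ∀ c ∈ C, ι (g * c * g⁻¹) = q * ι c := by
    by_cases hg : g ∈ E
    · obtain ⟨q, hq⟩ := hι.exists_smul_eq (ψ := fun c => ι (g * c * g⁻¹))
        (fun a ha b hb => by
          rw [← hι.isHomOn _ (hκ.conj_mem hg ha) _ (hκ.conj_mem hg hb)]
          simp only [mul_assoc, inv_mul_cancel_left])
        (fun d hd => (hι.eq_zero_iff (hκ.conj_mem hg (hι.le hd))).2
          (Subgroup.le_normalizer_iff.1 hnorm g hg d hd))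
      exact ⟨q, fun _ c hc => by rw [hq c hc, smul_eq_mul, mul_comm]⟩
    · exact ⟨0, fun hg' => absurd hg' hg⟩
  choose L hL using exists_multiplier
  exact ⟨L, hDC, hCE, hι, hκ, fun {g c} hg hc => hL g hg c hc⟩

namespace IsRankOneTower

lemma exists_pos (t : IsRankOneTower D C E ι κ L) : ∃ c ∈ C, 0 < ι c := by
  obtain ⟨c, hc, hcD⟩ := SetLike.exists_of_lt t.lt_left
  have hc0 : ι c ≠ 0 := mt (t.left.eq_zero_iff hc).1 hcD
  rcases hc0.lt_or_gt with hneg | hpos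
  · exact ⟨c⁻¹, C.inv_mem hc, by rwa [t.left.isHomOn.map_inv hc, neg_pos]⟩
  · exact ⟨c, hc, hpos⟩

lemma multiplier_mul (t : IsRankOneTower D C E ι κ L) (hx : x ∈ E) (hy : y ∈ E) :
    L (x * y) = L x * L y := by
  obtain ⟨c, hc, hc0⟩ := t.exists_pos
  refine mul_right_cancel₀ hc0.ne' ?_
  have hconj : x * y * c * (x * y)⁻¹ = x * (y * c * y⁻¹) * x⁻¹ := by group
  rw [← t.map_conj (E.mul_mem hx hy) hc, hconj, t.map_conj hx (t.right.conj_mem hy hc),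
    t.map_conj hy hc, mul_assoc]

lemma multiplier_of_mem (t : IsRankOneTower D C E ι κ L) (hx : x ∈ C) : L x = 1 := by
  obtain ⟨c, hc, hc0⟩ := t.exists_pos
  refine mul_right_cancel₀ hc0.ne' ?_
  rw [← t.map_conj (t.right.le hx) hc, t.left.isHomOn _ (C.mul_mem hx hc) _ (C.inv_mem hx),
    t.left.isHomOn x hx c hc, t.left.isHomOn.map_inv hx, one_mul, add_neg_cancel_comm]

lemma multiplier_pow (t : IsRankOneTower D C E ι κ L) (hx : x ∈ E) (n : ℕ) :
    L (x ^ n) = L x ^ n := by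
  induction n with
  | zero => rw [pow_zero, pow_zero, t.multiplier_of_mem C.one_mem]
  | succ n ih => rw [pow_succ, pow_succ, t.multiplier_mul (E.pow_mem hx n) hx, ih]

lemma multiplier_mul_inv (t : IsRankOneTower D C E ι κ L) (hx : x ∈ E) : L x * L x⁻¹ = 1 := by
  rw [← t.multiplier_mul hx (E.inv_mem hx), mul_inv_cancel, t.multiplier_of_mem C.one_mem]

lemma multiplier_ne_zero (t : IsRankOneTower D C E ι κ L) (hx : x ∈ E) : L x ≠ 0 :=
  left_ne_zero_of_mul_eq_one (t.multiplier_mul_inv hx)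

lemma mul_mem_of_neg (t : IsRankOneTower D C E ι κ L) (hQ : IsRelCone ⊥ E Q)
    (hR : IsRelCone D C ((Q ∩ C) \ D)) (hg : g ∈ Q) (hneg : L g < 0) (hc : c ∈ C) : c * g ∈ Q := by
  have hgE := hQ.subset hg
  have notMem {d : G} (hd : d ∈ C) (hdD : d ∉ D) : g⁻¹ * d ∉ Q := fun hgd => by
    have hd' : d ∈ (Q ∩ C) \ D := ⟨⟨by simpa using hQ.mul_mem hg hgd, hd⟩, hdD⟩
    have hconj : ι (g⁻¹ * d * g) = L g⁻¹ * ι d := by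
      simpa only [inv_inv] using t.map_conj (E.inv_mem hgE) hd
    have hinv := t.multiplier_mul_inv hgE
    have hmem : g⁻¹ * d * g ∈ C := by simpa using t.right.conj_mem (E.inv_mem hgE) hd
    have hgd' : g⁻¹ * d * g ∈ (Q ∩ C) \ D := by
      refine ⟨⟨hQ.mul_mem hgd hg, hmem⟩, fun hD => hdD ((t.left.eq_zero_iff hd).1 ?_)⟩
      rw [SetLike.mem_coe, ← t.left.eq_zero_iff hmem, hconj] at hD
      exact (mul_eq_zero_iff_left (t.multiplier_ne_zero (E.inv_mem hgE))).1 hD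
    have hpos := t.left.mul_pos hR hd' hgd'
    rw [hconj] at hpos
    nlinarith [mul_self_nonneg (ι d), mul_self_nonneg (L g⁻¹)]
  rcases hQ.total (E.mul_mem (t.right.le hc) hgE) with hcg | hcg | hcg
  · exact hcg
  · rw [mul_inv_rev] at hcg
    by_cases hcD : c⁻¹ ∈ D
    · obtain ⟨e, he, -, heD⟩ := hR.exists_mem_notMem le_rfl le_rfl t.lt_left.not_ge
      exact absurd (mul_assoc g⁻¹ c⁻¹ e ▸ hQ.mul_mem hcg he.1.1)
        (notMem (C.mul_mem (C.inv_mem hc) he.1.2) ((D.mul_mem_cancel_left hcD).not.2 heD))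
    · exact absurd hcg (notMem (C.inv_mem hc) hcD)
  · have hgC : g ∈ C := (C.mul_mem_cancel_left hc).1 (Subgroup.mem_bot.1 hcg ▸ C.one_mem)
    linarith [t.multiplier_of_mem hgC]

lemma isConvexFor_of_mem_of_neg (t : IsRankOneTower D C E ι κ L) (hQ : IsRelCone ⊥ E Q)
    (hR : IsRelCone D C ((Q ∩ C) \ D)) (hg : g ∈ Q) (hneg : L g < 0) : IsConvexFor C Q := by
  have hgE := hQ.subset hg
  have hg0 : κ g ≠ 0 := fun h0 => by
    linarith [t.multiplier_of_mem ((t.right.eq_zero_iff hgE).1 h0)]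
  have mul_pow_mem {c : G} (hc : c ∈ C) (n : ℕ) : c * g ^ (n + 1) ∈ Q := by
    induction n with
    | zero => simpa using t.mul_mem_of_neg hQ hR hg hneg hc
    | succ n ih => rw [pow_succ, ← mul_assoc]; exact hQ.mul_mem ih hg
  have mem_of_mul_pos {x : G} (hx : x ∈ E) (hpos : 0 < κ x * κ g) : x ∈ Q := by
    obtain ⟨m, n, -, hn, hmn⟩ := t.right.exists_pow_mul_inv_pow_mem hx hgE hpos
    obtain ⟨k, rfl⟩ := Nat.exists_eq_succ_of_ne_zero hn
    exact hQ.mem_of_pow_mem hx (n := m) (by simpa using mul_pow_mem hmn k)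
  have nonneg {x : G} (hx : x ∈ Q) : 0 ≤ κ x * κ g := le_of_not_gt fun hlt => by
    refine hQ.inv_notMem hx (mem_of_mul_pos (E.inv_mem (hQ.subset hx)) ?_)
    rwa [t.right.isHomOn.map_inv (hQ.subset hx), neg_mul, neg_pos]
  intro a ha b hb hab
  refine (t.right.eq_zero_iff (hQ.subset ha)).1 (mul_right_cancel₀ hg0 ?_)
  have hsum := (t.right.eq_zero_iff (E.mul_mem (hQ.subset ha) (hQ.subset hb))).2 hab
  rw [t.right.isHomOn a (hQ.subset ha) b (hQ.subset hb)] at hsum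
  have hprod : κ a * κ g + κ b * κ g = 0 := by rw [← add_mul, hsum, zero_mul]
  linarith [nonneg ha, nonneg hb]

theorem isConvexFor_of_neg (t : IsRankOneTower D C E ι κ L) (hg : g ∈ E) (hneg : L g < 0)
    (hQ : IsRelCone ⊥ E Q) (hD : IsConvexFor D (Q ∩ C)) : IsConvexFor C Q := by
  have hR := (hQ.inter bot_le t.right.le).sdiff bot_le t.left.le hD
  rcases hQ.total hg with hgQ | hgQ | hg1
  · exact t.isConvexFor_of_mem_of_neg hQ hR hgQ hneg
  · refine t.isConvexFor_of_mem_of_neg hQ hR hgQ ?_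
    nlinarith [t.multiplier_mul_inv hg]
  · linarith [t.multiplier_of_mem (Subgroup.mem_bot.1 hg1 ▸ C.one_mem)]

end IsRankOneTower

end RankOne

section AffineCones

variable {G : Type*} [Group G] {C D E : Subgroup G} {P : Set G} {ι κ L : G → ℚ} {c g x y : G}

open scoped commutatorElement

lemma isRelCone_lt_apply {X : Type*} [LinearOrder X] {ρ : G → X → X} {α : X} (hDE : D ≤ E)
    (hmul : ∀ x ∈ E, ∀ y ∈ E, ∀ β, ρ (x * y) β = ρ x (ρ y β)) (hmono : ∀ x ∈ E, StrictMono (ρ x))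
    (hstab : ∀ x ∈ E, ρ x α = α ↔ x ∈ D) : IsRelCone D E {x | x ∈ E ∧ α < ρ x α} where
  le := hDE
  subset := fun _ hx => hx.1
  mul_mem := fun {a b} ha hb => ⟨E.mul_mem ha.1 hb.1, by
    rw [hmul a ha.1 b hb.1]
    exact ha.2.trans (hmono a ha.1 hb.2)⟩
  total := fun {x} hx => by
    rcases lt_trichotomy α (ρ x α) with hlt | heq | hgt
    · exact .inl ⟨hx, hlt⟩
    · exact .inr (.inr ((hstab x hx).1 heq.symm))
    · refine .inr (.inl ⟨E.inv_mem hx, ?_⟩)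
      have hlt := hmono _ (E.inv_mem hx) hgt
      rwa [← hmul _ (E.inv_mem hx) x hx, inv_mul_cancel, (hstab 1 E.one_mem).2 D.one_mem] at hlt
  disjoint := fun hx hxD => hx.2.ne' ((hstab _ hx.1).2 hxD)

namespace IsRankOneTower

lemma commutator_mem (t : IsRankOneTower D C E ι κ L) (hx : x ∈ E) (hy : y ∈ E) : ⁅x, y⁆ ∈ C := by
  refine (t.right.eq_zero_iff ?_).1 (t.right.isHomOn.map_commutator hx hy)
  exact E.mul_mem (E.mul_mem (E.mul_mem hx hy) (E.inv_mem hx)) (E.inv_mem hy)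

lemma map_commutator_mul (t : IsRankOneTower D C E ι κ L) (hx : x ∈ E) (hy : y ∈ E) (hg : g ∈ E) :
    ι ⁅x * y, g⁆ = L x * ι ⁅y, g⁆ + ι ⁅x, g⁆ := by
  have hmul : ⁅x * y, g⁆ = x * ⁅y, g⁆ * x⁻¹ * ⁅x, g⁆ := by
    simp only [commutatorElement_def]
    group
  rw [hmul, t.left.isHomOn _ (t.right.conj_mem hx (t.commutator_mem hy hg)) _
    (t.commutator_mem hx hg), t.map_conj hx (t.commutator_mem hy hg)]

lemma map_commutator_of_mem (t : IsRankOneTower D C E ι κ L) (hc : c ∈ C) (hg : g ∈ E) :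
    ι ⁅c, g⁆ = (1 - L g) * ι c := by
  rw [commutatorElement_def, mul_assoc, mul_assoc, ← mul_assoc g,
    t.left.isHomOn c hc _ (t.right.conj_mem hg (C.inv_mem hc)), t.map_conj hg (C.inv_mem hc),
    t.left.isHomOn.map_inv hc]
  ring

lemma commutator_le_of_multiplier_eq_one (t : IsRankOneTower D C E ι κ L)
    (hL : ∀ g ∈ E, L g = 1) : ⁅E, E⁆ ≤ D := by
  refine Subgroup.commutator_le.2 fun x hx y hy => ?_
  rw [← t.left.eq_zero_iff (t.commutator_mem hx hy)]
  obtain ⟨v, hv⟩ := t.right.exists_smul_eq (ψ := fun x => ι ⁅x, y⁆)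
    (fun x hx x' hx' => by
      beta_reduce
      rw [t.map_commutator_mul hx hx' hy, hL x hx, one_mul, add_comm])
    (fun c hc => by rw [t.map_commutator_of_mem hc hy, hL y hy, sub_self, zero_mul])
  have hvy := hv y hy
  rw [commutatorElement_self, t.left.isHomOn.map_one, eq_comm, smul_eq_zero] at hvy
  rcases hvy with hy0 | hv0
  · have hyC := (t.right.eq_zero_iff hy).1 hy0
    rw [← commutatorElement_inv, t.left.isHomOn.map_inv (t.commutator_mem hy hx),
      t.map_commutator_of_mem hyC hx, hL x hx, sub_self, zero_mul, neg_zero]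
  · rw [hv x hx, hv0, smul_zero]

/-- Otherwise `E / D` would be abelian, hence of rank one, and could not contain `C / D`. -/
lemma exists_multiplier_ne_one (t : IsRankOneTower D C E ι κ L) (hP : IsRelCone D E P)
    (hcount : {Q : Set G | IsRelCone D E Q}.Countable) : ∃ g ∈ E, L g ≠ 1 := by
  by_contra! hL
  obtain ⟨φ, hφ⟩ := exists_ratEmbedding_of_commutator_le hP hcount
    (t.commutator_le_of_multiplier_eq_one hL)
  obtain ⟨r, hr⟩ := hφ.exists_smul_eq t.right.isHomOn fun d hd =>
    (t.right.eq_zero_iff (hP.le hd)).2 (t.left.le hd)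
  obtain ⟨c, hc, hcD⟩ := SetLike.exists_of_lt t.lt_left
  obtain ⟨e, he, heC⟩ := SetLike.exists_of_lt t.lt_right
  have hφc : φ c ≠ 0 := mt (hφ.eq_zero_iff (t.right.le hc)).1 hcD
  have hr0 : r = 0 := by
    have hκc := hr c (t.right.le hc)
    rw [(t.right.eq_zero_iff (t.right.le hc)).2 hc, eq_comm, smul_eq_zero] at hκc
    exact hκc.resolve_left hφc
  exact heC ((t.right.eq_zero_iff he).1 (by rw [hr e he, hr0, smul_zero]))

lemma mem_of_multiplier_eq_one (t : IsRankOneTower D C E ι κ L) (hpos : ∀ g ∈ E, 0 < L g)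
    (hg : g ∈ E) (hg1 : L g ≠ 1) (hx : x ∈ E) (hx1 : L x = 1) : x ∈ C := by
  obtain ⟨v, hv⟩ := t.right.exists_smul_eq (ψ := fun x => Real.log (L x))
    (fun x hx y hy => by
      have hne {z : G} (hz : z ∈ E) : (L z : ℝ) ≠ 0 := by exact_mod_cast (hpos z hz).ne'
      beta_reduce
      rw [t.multiplier_mul hx hy, Rat.cast_mul, Real.log_mul (hne hx) (hne hy)])
    (fun c hc => by rw [t.multiplier_of_mem hc, Rat.cast_one, Real.log_one])
  have hv0 : v ≠ 0 := by
    rintro rfl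
    refine Real.log_ne_zero_of_pos_of_ne_one ?_ ?_ ((hv g hg).trans (smul_zero _))
    · exact_mod_cast hpos g hg
    · exact_mod_cast hg1
  have hxv := hv x hx
  rw [hx1, Rat.cast_one, Real.log_one, eq_comm, smul_eq_zero] at hxv
  exact (t.right.eq_zero_iff hx).1 (hxv.resolve_right hv0)

/-- The translation part of the affine action of `E` on the line extending the translations `ι` of
`C`, with linear part `L` and normalized so that `g` fixes `0`; this requires `L g ≠ 1`. -/
def translation (ι L : G → ℚ) (g x : G) : ℚ := ι ⁅x, g⁆ / (1 - L g)

lemma translation_mul (t : IsRankOneTower D C E ι κ L) (hg : g ∈ E) (hx : x ∈ E) (hy : y ∈ E) :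
    translation ι L g (x * y) = L x * translation ι L g y + translation ι L g x := by
  rw [translation, t.map_commutator_mul hx hy hg, add_div, mul_div_assoc]
  rfl

lemma translation_of_mem (t : IsRankOneTower D C E ι κ L) (hg : g ∈ E) (hg1 : L g ≠ 1)
    (hc : c ∈ C) : translation ι L g c = ι c := by
  rw [translation, t.map_commutator_of_mem hc hg, mul_div_cancel_left₀ _ (sub_ne_zero.2 hg1.symm)]

lemma translation_pow (t : IsRankOneTower D C E ι κ L) (n : ℕ) : translation ι L g (g ^ n) = 0 := by
  rw [translation, commutatorElement_eq_one_iff_commute.2 ((Commute.refl g).pow_left n),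
    t.left.isHomOn.map_one, zero_div]

/-- The stabilizer of an irrational point is `D`, since the rational affine maps fixing it are
trivial. -/
lemma isRelCone_affine (t : IsRankOneTower D C E ι κ L) (hpos : ∀ g ∈ E, 0 < L g) (hg : g ∈ E)
    (hg1 : L g ≠ 1) {α : ℝ} (hα : Irrational α) :
    IsRelCone D E {x | x ∈ E ∧ α < L x * α + translation ι L g x} := by
  refine isRelCone_lt_apply (ρ := fun x β => (L x : ℝ) * β + translation ι L g x)
    (t.left.le.trans t.right.le) (fun x hx y hy β => ?_) (fun x hx β γ hβγ => ?_)
    (fun x hx => ⟨fun hfix => ?_, fun hxD => ?_⟩)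
  · rw [t.multiplier_mul hx hy, t.translation_mul hg hx hy]
    push_cast
    ring
  · have hLx : (0 : ℝ) < L x := by exact_mod_cast hpos x hx
    beta_reduce
    gcongr
  · have hLx : L x = 1 := by
      by_contra hne
      refine hα ⟨translation ι L g x / (1 - L x), ?_⟩
      have hne' : (1 : ℝ) - L x ≠ 0 := by exact_mod_cast sub_ne_zero.2 (Ne.symm hne)
      push_cast
      rw [div_eq_iff hne']
      linarith
    have hxC := t.mem_of_multiplier_eq_one hpos hg hg1 hx hLx
    rw [hLx, Rat.cast_one, one_mul, add_eq_left, Rat.cast_eq_zero,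
      t.translation_of_mem hg hg1 hxC] at hfix
    exact (t.left.eq_zero_iff hxC).1 hfix
  · have hxC := t.left.le hxD
    rw [t.multiplier_of_mem hxC, t.translation_of_mem hg hg1 hxC, (t.left.eq_zero_iff hxC).2 hxD]
    simp

/-- Some `c⁻ᵏ gⁿ` with `c ∈ C` expands about a fixed point lying between `α` and `γ`. -/
lemma exists_affine_separating (t : IsRankOneTower D C E ι κ L) (hg : g ∈ E) (hg1 : 1 < L g)
    {α γ : ℝ} (hαγ : α < γ) :
    ∃ x ∈ E, L x * α + translation ι L g x < α ∧ γ < L x * γ + translation ι L g x := by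
  obtain ⟨c, hc, hc0⟩ := t.exists_pos
  have hc0' : (0 : ℝ) < ι c := by exact_mod_cast hc0
  obtain ⟨n, hn⟩ := pow_unbounded_of_one_lt ((ι c : ℝ) / (γ - α) + 1)
    (show (1 : ℝ) < L g by exact_mod_cast hg1)
  have hgap : (ι c : ℝ) < ((L g : ℝ) ^ n - 1) * (γ - α) := by
    rw [← div_lt_iff₀ (sub_pos.2 hαγ)]
    linarith
  set k := ⌊((L g : ℝ) ^ n - 1) * α / ι c⌋
  have hk : k * (ι c : ℝ) ≤ ((L g : ℝ) ^ n - 1) * α := (le_div_iff₀ hc0').1 (Int.floor_le _)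
  have hk' : ((L g : ℝ) ^ n - 1) * α < (k + 1) * ι c :=
    (div_lt_iff₀ hc0').1 (Int.lt_floor_add_one _)
  have hck : c ^ (-(k + 1)) ∈ C := C.zpow_mem hc _
  have hL : L (c ^ (-(k + 1)) * g ^ n) = L g ^ n := by
    rw [t.multiplier_mul (t.right.le hck) (E.pow_mem hg n), t.multiplier_of_mem hck, one_mul,
      t.multiplier_pow hg]
  have hT : translation ι L g (c ^ (-(k + 1)) * g ^ n) = -((k + 1) * ι c) := by
    rw [t.translation_mul hg (t.right.le hck) (E.pow_mem hg n), t.translation_pow, mul_zero,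
      zero_add, t.translation_of_mem hg hg1.ne' hck, t.left.isHomOn.map_zpow hc, zsmul_eq_mul]
    push_cast
    ring
  refine ⟨_, E.mul_mem (t.right.le hck) (E.pow_mem hg n), ?_, ?_⟩ <;> rw [hL, hT] <;> push_cast <;>
    linarith

theorem not_countable_of_one_lt (t : IsRankOneTower D C E ι κ L) (hpos : ∀ g ∈ E, 0 < L g)
    (hg : g ∈ E) (hg1 : 1 < L g) : ¬{Q : Set G | IsRelCone D E Q}.Countable := fun hcount => by
  have hinj : Set.InjOn (fun α : ℝ => {x | x ∈ E ∧ α < L x * α + translation ι L g x})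
      {α | Irrational α} := by
    refine fun α _ γ _ heq => le_antisymm (le_of_not_gt fun hgt => ?_) (le_of_not_gt fun hlt => ?_)
    · obtain ⟨x, hx, hxγ, hxα⟩ := t.exists_affine_separating hg hg1 hgt
      exact ((Set.ext_iff.1 heq x).1 ⟨hx, hxα⟩).2.not_gt hxγ
    · obtain ⟨x, hx, hxα, hxγ⟩ := t.exists_affine_separating hg hg1 hlt
      exact ((Set.ext_iff.1 heq x).2 ⟨hx, hxγ⟩).2.not_gt hxα
  have hirr : {α : ℝ | Irrational α}.Countable :=
    Set.MapsTo.countable_of_injOn (fun α hα => t.isRelCone_affine hpos hg hg1.ne' hα) hinj hcount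
  refine Cardinal.not_countable_real ((hirr.union (Set.countable_range ((↑) : ℚ → ℝ))).mono ?_)
  exact fun α _ => (em (Irrational α)).imp id not_not.1

theorem exists_multiplier_neg (t : IsRankOneTower D C E ι κ L) (hP : IsRelCone D E P)
    (hcount : {Q : Set G | IsRelCone D E Q}.Countable) : ∃ g ∈ E, L g < 0 := by
  by_contra! hnonneg
  have hpos (g : G) (hg : g ∈ E) : 0 < L g := (hnonneg g hg).lt_of_ne' (t.multiplier_ne_zero hg)
  obtain ⟨g, hg, hg1⟩ := t.exists_multiplier_ne_one hP hcount
  rcases hg1.lt_or_gt with hlt | hgt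
  · refine t.not_countable_of_one_lt hpos (E.inv_mem hg) ?_ hcount
    nlinarith [t.multiplier_mul_inv hg, hpos _ (E.inv_mem hg)]
  · exact t.not_countable_of_one_lt hpos hg hgt hcount

end IsRankOneTower

end AffineCones

/-- Every positive cone of the convex subgroup `E` makes convex all the subgroups of `E` that are
convex for `P`. -/
def IsRigid {G : Type*} [Group G] (P : Set G) (E : Subgroup G) : Prop :=
  ∀ Q, IsRelCone ⊥ E Q → ∀ F, IsConvexFor F P → F ≤ E → IsConvexFor F Q

section Rigidity

variable {G : Type*} [Group G] {C D E : Subgroup G} {P : Set G}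

lemma IsRigid.le_normalizer (hC : IsRigid P C) (h : IsRelCone ⊥ ⊤ P) (hj : IsJump P D C)
    (hnorm : E ≤ Subgroup.normalizer (C : Set G)) : E ≤ Subgroup.normalizer (D : Set G) := by
  refine Subgroup.le_normalizer_iff.2 fun g hg d hd => ?_
  have mem_conj {c : G} : c ∈ C ↔ g * c * g⁻¹ ∈ C := Subgroup.mem_normalizer_iff.1 (hnorm hg) c
  have hcone : IsRelCone ⊥ C (MulAut.conj g ⁻¹' (P ∩ C)) := by
    convert! (h.inter bot_le le_top).comap (MulAut.conj g).toMonoidHom using 1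
    · ext x; simp
    · ext x; exact mem_conj
  let D' := D.comap (MulAut.conj g⁻¹).toMonoidHom
  have hle : D' ≤ C := fun x hx => by simpa [mul_assoc] using mem_conj.1 (hj.lt.le hx)
  have hconv : IsConvexFor D' P := by
    refine hj.convex_right.trans ?_ hle
    convert! (hC _ hcone D hj.convex_left hj.lt.le).comap (MulAut.conj g⁻¹).toMonoidHom using 1
    ext x
    simp [mul_assoc]
  have hne : D' ≠ C := fun heq => by
    obtain ⟨c, hc, hcD⟩ := SetLike.exists_of_lt hj.lt
    have hc' : g * c * g⁻¹ ∈ D' := heq ▸ mem_conj.1 hc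
    exact hcD (by simpa [D', mul_assoc] using hc')
  exact hj.le_of_lt hconv (hle.lt_of_ne hne) (by simpa [D', mul_assoc] using hd)

lemma IsConvexFor.countable_section (hE : IsConvexFor E P) (h : IsRelCone ⊥ ⊤ P)
    (hcount : {P : Set G | IsRelCone ⊥ ⊤ P}.Countable) :
    {Q : Set G | IsRelCone C E Q}.Countable :=
  (h.inter bot_le le_top : IsRelCone ⊥ C _).countable_section hcount (h.sdiff bot_le le_top hE)

lemma IsJump.exists_ratEmbedding (hj : IsJump P C E) (h : IsRelCone ⊥ ⊤ P) (hP : IsConradian P)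
    (hcount : {P : Set G | IsRelCone ⊥ ⊤ P}.Countable) : ∃ ι : G → ℚ, IsSectionEmbedding C E ι :=
  have hR := hj.isRelCone h
  exists_ratEmbedding_of_commutator_le hR
    (hj.convex_right.countable_section h hcount)
    (hR.commutator_le_of_archimedean (hP.le_normalizer h hj)
      fun _ ha _ hb => hP.exists_lt_pow_section h hj ha hb)

/-- Let `D < C` be the jump below. Some element of `E` acts on `C / D` by a negative multiplier,
since otherwise `E / D` would have uncountably many orders; this forces `C` to be convex for every
cone. -/
lemma IsRigid.of_isJump (hC : IsRigid P C) (hj : IsJump P C E) (h : IsRelCone ⊥ ⊤ P)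
    (hP : IsConradian P) (hfin : {C : Subgroup G | IsConvexFor C P}.Finite)
    (hcount : {P : Set G | IsRelCone ⊥ ⊤ P}.Countable) : IsRigid P E := by
  intro Q hQ F hF hFE
  rcases hFE.eq_or_lt with rfl | hFE
  · exact .of_subset hQ.subset
  have hQC : IsRelCone ⊥ C (Q ∩ C) := hQ.inter bot_le hj.lt.le
  have hFC := hj.le_of_lt hF hFE
  suffices hCQ : IsConvexFor C Q from hCQ.trans (hC _ hQC F hF hFC) hFC
  rcases eq_or_ne C ⊥ with rfl | hne
  · exact .bot hQ
  obtain ⟨D, hDC⟩ := exists_isJump h hfin hj.convex_left hne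
  obtain ⟨ι, hι⟩ := hDC.exists_ratEmbedding h hP hcount
  obtain ⟨κ, hκ⟩ := hj.exists_ratEmbedding h hP hcount
  obtain ⟨L, t⟩ := exists_isRankOneTower hDC.lt hj.lt hι hκ
    (hC.le_normalizer h hDC (hP.le_normalizer h hj))
  have hDE : IsRelCone D E ((P \ D) ∩ E) :=
    (h.sdiff bot_le le_top hDC.convex_left).inter (hDC.lt.trans hj.lt).le le_top
  obtain ⟨g, hg, hneg⟩ := t.exists_multiplier_neg hDE
    (hj.convex_right.countable_section h hcount)
  exact t.isConvexFor_of_neg hg hneg hQ (hC _ hQC D hDC.convex_left hDC.lt.le)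

theorem isRigid_of_isConvexFor (hE : IsConvexFor E P) (h : IsRelCone ⊥ ⊤ P) (hP : IsConradian P)
    (hfin : {C : Subgroup G | IsConvexFor C P}.Finite)
    (hcount : {P : Set G | IsRelCone ⊥ ⊤ P}.Countable) : IsRigid P E := by
  refine convex_induction h hfin ?_ (fun C E hj hC => hC.of_isJump hj h hP hfin hcount) hE
  intro Q hQ F _ hF
  exact le_bot_iff.1 hF ▸ .bot hQ

theorem finite_isRelCone_of_isConvexFor (hE : IsConvexFor E P) (h : IsRelCone ⊥ ⊤ P)
    (hP : IsConradian P) (hfin : {C : Subgroup G | IsConvexFor C P}.Finite)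
    (hcount : {P : Set G | IsRelCone ⊥ ⊤ P}.Countable) : {Q : Set G | IsRelCone ⊥ E Q}.Finite := by
  refine convex_induction h hfin (p := fun E => {Q : Set G | IsRelCone ⊥ E Q}.Finite) ?_ ?_ hE
  · refine (Set.finite_singleton ∅).subset fun Q hQ => Set.eq_empty_of_forall_notMem fun x hx => ?_
    exact hQ.disjoint hx (hQ.subset hx)
  · intro C E hj hC
    obtain ⟨ι, hι⟩ := hj.exists_ratEmbedding h hP hcount
    refine (hι.finite_isRelCone.image2 (· ∪ ·) hC).subset fun Q hQ => ?_
    have hE := isRigid_of_isConvexFor hj.convex_right h hP hfin hcount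
    have hCQ := hE Q hQ C hj.convex_left hj.lt.le
    exact ⟨Q \ C, hQ.sdiff bot_le hj.lt.le hCQ, Q ∩ C, hQ.inter bot_le hj.lt.le,
      Set.sdiff_union_inter Q C⟩

theorem finite_of_countable (hcount : {P : Set G | IsPosCone P}.Countable) :
    {P : Set G | IsPosCone P}.Finite := by
  rcases Set.eq_empty_or_nonempty {P : Set G | IsPosCone P} with hempty | ⟨P, hP⟩
  · exact hempty ▸ Set.finite_empty
  obtain ⟨Q, hQ, hconrad⟩ := exists_isConradian hcount hP
  simp only [isPosCone_iff_isRelCone] at hcount ⊢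
  exact finite_isRelCone_of_isConvexFor (.of_subset Q.subset_univ) hQ hconrad
    (finite_convex_of_countable hQ hcount) hcount

end Rigidity

/-- If the set of left-order positive cones on a group is infinite, then it is
uncountable. -/
theorem uncountably_many_orderings (Γ : Type*) [Group Γ]
    (h : {P : Set Γ | IsPosCone P}.Infinite) :
    ¬ {P : Set Γ | IsPosCone P}.Countable :=
  fun hcount => h (finite_of_countable hcount)
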